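/- arXiv:1308.5276 — 2 statements merged into one kernel-verified Lean document; each statement's English description precedes it below -/
import Mathlib

section
/- Let u_1, ..., u_m be column vectors in ℂ^d such that Σ_{i=1}^m u_i u_i* = I and ‖u_i‖² ≤ ε for all i. Let r ∈ ℕ and suppose t_1, ..., t_r > 0 satisfy Σ_{j=1}^r t_j = 1. Then there exists a partition of {1, ..., m} into r sets S_1, ..., S_r such that for each 1 ≤ j ≤ r, ‖Σ_{i ∈ S_j} u_i u_i*‖ ≤ t_j (1 + √(rε))². -/
/-- The outer product `u u*` of a vector `u ∈ ℂ^d` with itself, as a `d × d` matrix. -/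
noncomputable def outer {d : ℕ} (u : EuclideanSpace ℂ (Fin d)) :
    Matrix (Fin d) (Fin d) ℂ :=
  Matrix.of fun i j => u i * starRingEnd ℂ (u j)

/-- The operator norm of a matrix, acting on Euclidean space. -/
noncomputable def opNorm {d : ℕ} (A : Matrix (Fin d) (Fin d) ℂ) : ℝ :=
  ‖Matrix.toEuclideanCLM (𝕜 := ℂ) A‖

section Part1
open Polynomial

lemma ks_local {a q : ℝ[X]} {r : ℝ} {k : ℕ}
    (him : ∀ z : ℂ, 0 < z.im →
      (aeval z a * starRingEnd ℂ (aeval z ((X - C r) ^ k * q))).im ≤ 0)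
    (ω : ℂ) (hω : 0 < ω.im) :
    a.eval r * q.eval r * (starRingEnd ℂ ω ^ k).im ≤ 0 := by
  have hcont : Continuous (fun e : ℝ =>
      (aeval ((r : ℂ) + e * ω) a * starRingEnd ℂ (aeval ((r : ℂ) + e * ω) q) *
        starRingEnd ℂ ω ^ k).im) := by
    have h1 : Continuous (fun e : ℝ => (r : ℂ) + e * ω) := by fun_prop
    have h2 := (Polynomial.continuous_aeval (A := ℂ) a).comp h1
    have h3 := (Polynomial.continuous_aeval (A := ℂ) q).comp h1
    exact Complex.continuous_im.comp
      ((h2.mul (Complex.continuous_conj.comp h3)).mul continuous_const)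
  have hle : ∀ e : ℝ, 0 < e → (aeval ((r : ℂ) + e * ω) a *
      starRingEnd ℂ (aeval ((r : ℂ) + e * ω) q) * starRingEnd ℂ ω ^ k).im ≤ 0 := by
    intro e he
    have h := him ((r : ℂ) + e * ω) (by simp; positivity)
    have h2 : aeval ((r : ℂ) + e * ω) a * starRingEnd ℂ
        (aeval ((r : ℂ) + e * ω) ((X - C r) ^ k * q)) =
        ((e ^ k : ℝ) : ℂ) * (aeval ((r : ℂ) + e * ω) a *
        starRingEnd ℂ (aeval ((r : ℂ) + e * ω) q) * starRingEnd ℂ ω ^ k) := by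
      simp [mul_pow]
      ring
    rw [h2, Complex.im_ofReal_mul] at h
    exact nonpos_of_mul_nonpos_right h (by positivity)
  have hlim := (hcont.tendsto 0).mono_left (nhdsWithin_le_nhds (s := Set.Ioi 0))
  have := le_of_tendsto hlim (Filter.eventually_of_mem self_mem_nhdsWithin (fun e he => hle e he))
  have e1 : aeval (r : ℂ) a = ((a.eval r : ℝ) : ℂ) := by
    simpa using aeval_algebraMap_apply_eq_algebraMap_eval (A := ℂ) r a
  have e2 : aeval (r : ℂ) q = ((q.eval r : ℝ) : ℂ) := by
    simpa using aeval_algebraMap_apply_eq_algebraMap_eval (A := ℂ) r q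
  simp only [Complex.ofReal_zero, zero_mul, add_zero, e1, e2, Complex.conj_ofReal] at this
  rw [← Complex.ofReal_mul, Complex.im_ofReal_mul] at this
  exact this

lemma ks_simple {a q : ℝ[X]} {r : ℝ} {k : ℕ} (hk : k ≠ 0)
    (him : ∀ z : ℂ, 0 < z.im →
      (aeval z a * starRingEnd ℂ (aeval z ((X - C r) ^ k * q))).im ≤ 0)
    (ha : a.eval r ≠ 0) (hq : q.eval r ≠ 0) : k = 1 ∧ 0 ≤ a.eval r * q.eval r := by
  have hk1 : k = 1 := by
    by_contra hne
    have hk2 : (2 : ℝ) ≤ k := by exact_mod_cast (by omega : 2 ≤ k)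
    have key : ∀ θ : ℝ, 0 < θ → θ < Real.pi * k →
        a.eval r * q.eval r * Real.sin θ ≥ 0 := by
      intro θ h0 h1
      have hkp : (0:ℝ) < k := by linarith
      have := ks_local him (Complex.exp ((θ / k : ℝ) * Complex.I)) (by
        rw [Complex.exp_ofReal_mul_I_im]
        exact Real.sin_pos_of_pos_of_lt_pi (by positivity) (by rw [div_lt_iff₀ hkp]; exact h1))
      rw [← map_pow, ← Complex.exp_nat_mul, Complex.conj_im] at this
      have e : (k : ℂ) * ((θ / k : ℝ) * Complex.I) = (θ : ℝ) * Complex.I := by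
        have : (k : ℂ) ≠ 0 := by exact_mod_cast hkp.ne'
        push_cast
        field_simp
      rw [e, Complex.exp_ofReal_mul_I_im] at this
      linarith
    have hp := Real.pi_pos
    have k1 := key (Real.pi / 2) (by positivity) (by nlinarith)
    have k2 := key (Real.pi / 2 + Real.pi) (by positivity) (by nlinarith)
    rw [Real.sin_add_pi] at k2
    simp at k1 k2
    exact mul_ne_zero ha hq (le_antisymm k2 k1)
  refine ⟨hk1, ?_⟩
  subst hk1
  have := ks_local him Complex.I (by simp)
  simp at this
  linarith

lemma ks_pf (n : ℕ) : ∀ (a b : ℝ[X]), b.natDegree = n → b ≠ 0 → b.Splits →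
    a.degree < b.degree →
    (∀ z : ℂ, 0 < z.im → (aeval z a * starRingEnd ℂ (aeval z b)).im ≤ 0) →
    ∃ c : ℝ → ℝ, (∀ s, 0 ≤ c s) ∧ ∀ x, b.eval x ≠ 0 →
      a.eval x = b.eval x * ∑ s ∈ b.roots.toFinset, c s / (x - s) := by
  classical
  induction n with
  | zero =>
    intro a b hn hb0 hs hdeg him
    have : a = 0 := by
      rw [degree_eq_natDegree hb0, hn] at hdeg
      simpa using hdeg
    exact ⟨0, by simp, by simp [this]⟩
  | succ n ih =>
  intro a b hn hb0 hs hdeg him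
  by_cases hcom : ∃ r, a.eval r = 0 ∧ b.eval r = 0
  · obtain ⟨r, har, hbr⟩ := hcom
    obtain ⟨a1, rfl⟩ := dvd_iff_isRoot.2 har
    obtain ⟨b1, rfl⟩ := dvd_iff_isRoot.2 hbr
    have hb1 : b1 ≠ 0 := right_ne_zero_of_mul hb0
    obtain ⟨c, hc, hc'⟩ := ih a1 b1 (by
        rw [natDegree_mul (X_sub_C_ne_zero r) hb1, natDegree_X_sub_C] at hn; omega) hb1
        (splits_X_sub_C_mul_iff.1 hs) (by
        rw [degree_mul, degree_mul] at hdeg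
        exact lt_of_add_lt_add_left hdeg) (by
        intro z hz
        have h := him z hz
        have hne : z - r ≠ 0 := by
          intro h0
          have := congrArg Complex.im h0
          simp at this; linarith
        have e : aeval z ((X - C r) * a1) * starRingEnd ℂ (aeval z ((X - C r) * b1)) =
            ((Complex.normSq (z - r) : ℝ) : ℂ) * (aeval z a1 * starRingEnd ℂ (aeval z b1)) := by
          rw [Complex.normSq_eq_conj_mul_self]
          simp
          ring
        rw [e, Complex.im_ofReal_mul] at h
        exact nonpos_of_mul_nonpos_right h (Complex.normSq_pos.2 hne))
    refine ⟨fun s => if s ∈ b1.roots.toFinset then c s else 0, ?_, ?_⟩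
    · intro s; dsimp; split_ifs <;> simp [hc]
    · intro x hx
      have hx1 : b1.eval x ≠ 0 := by
        intro h; apply hx; simp [h]
      rw [eval_mul, eval_mul, hc' x hx1]
      have hsub : b1.roots.toFinset ⊆ ((X - C r) * b1).roots.toFinset := by
        intro s hs
        rw [Multiset.mem_toFinset, mem_roots hb1] at hs
        rw [Multiset.mem_toFinset, mem_roots hb0, IsRoot, eval_mul, hs.eq_zero, mul_zero]
      rw [← Finset.sum_subset hsub]
      · rw [mul_assoc]
        congr 2
        apply Finset.sum_congr rfl
        intro s hs
        simp only [hs, if_true]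
      · intro s _ hs
        simp only [hs, if_false, zero_div]
  · push Not at hcom
    have hroot : ∀ r, b.eval r = 0 → rootMultiplicity r b = 1 ∧
        0 ≤ a.eval r * (derivative b).eval r := by
      intro r hr
      obtain ⟨q, hq, hq'⟩ := exists_eq_pow_rootMultiplicity_mul_and_not_dvd b hb0 r
      have hk : rootMultiplicity r b ≠ 0 := by
        have := (rootMultiplicity_pos hb0).2 hr
        omega
      have hqr : q.eval r ≠ 0 := fun h => hq' (dvd_iff_isRoot.2 h)
      rw [hq] at him
      have := ks_simple hk him (fun h => hcom r h hr) hqr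
      refine ⟨this.1, ?_⟩
      rw [this.1, pow_one] at hq
      have e : (derivative b).eval r = q.eval r := by
        rw [hq]; simp
      rw [e]; exact this.2
    have hnd : b.roots.Nodup := by
      rw [Multiset.nodup_iff_count_le_one]
      intro r
      rw [count_roots]
      by_cases h : b.eval r = 0
      · exact (hroot r h).1.le
      · rw [rootMultiplicity_eq_zero h]; omega
    set s := b.roots.toFinset with hsdef
    have hbs : b = C b.leadingCoeff * Lagrange.nodal s id := by
      conv_lhs => rw [hs.eq_prod_roots]
      rw [Lagrange.nodal_eq, Finset.prod, hsdef, Multiset.toFinset_val, hnd.dedup]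
      rfl
    have hcard : b.degree = s.card := by
      rw [hs.degree_eq_card_roots hb0, hsdef, Multiset.toFinset_card_of_nodup hnd]
    have hinterp := Lagrange.eq_interpolate (s := s) (v := id) (f := a)
      (Function.injective_id.injOn) (by rw [← hcard]; exact hdeg)
    have hl : b.leadingCoeff ≠ 0 := leadingCoeff_ne_zero.2 hb0
    refine ⟨fun r => if r ∈ s then a.eval r / (derivative b).eval r else 0, ?_, ?_⟩
    · intro r
      dsimp
      split_ifs with h
      · have : b.eval r = 0 := by
          rw [hsdef, Multiset.mem_toFinset, mem_roots hb0] at h; exact h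
        have h2 := (hroot r this).2
        rw [div_eq_mul_inv]
        rcases le_or_gt 0 ((derivative b).eval r) with h3 | h3
        · rcases h3.eq_or_lt with h4 | h4
          · simp [← h4]
          · exact mul_nonneg (nonneg_of_mul_nonneg_left h2 h4) (by positivity)
        · exact mul_nonneg_of_nonpos_of_nonpos (by nlinarith) (inv_nonpos.2 h3.le)
      · exact le_rfl
    · intro x hx
      have hxs : ∀ i ∈ s, x ≠ id i := by
        intro i hi h
        rw [hsdef, Multiset.mem_toFinset, mem_roots hb0] at hi
        apply hx; rw [h]; exact hi
      conv_lhs => rw [hinterp, Lagrange.eval_interpolate_not_at_node _ hxs]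
      have hbx : b.eval x = b.leadingCoeff * (Lagrange.nodal s id).eval x := by
        conv_lhs => rw [hbs]
        simp
      have hbd : ∀ i, (derivative b).eval i =
          b.leadingCoeff * (derivative (Lagrange.nodal s id)).eval i := by
        intro i
        conv_lhs => rw [hbs]
        simp
      rw [hbx, mul_comm b.leadingCoeff, mul_assoc]
      congr 1
      rw [Finset.mul_sum]
      apply Finset.sum_congr rfl
      intro i hi
      rw [Lagrange.nodalWeight_eq_eval_derivative_nodal hi]
      simp only [hi, if_true, hbd, id]
      field_simp
end Part1

section Part2
open MvPolynomial
set_option linter.unusedSectionVars false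

variable {σ : Type*} [Fintype σ] [DecidableEq σ]

/-- Restriction of a multivariate polynomial to the line `P + X w`. -/
noncomputable def ksLine {R : Type*} [CommRing R] [Algebra ℝ R] (P w : σ → R) :
    MvPolynomial σ ℝ →ₐ[ℝ] Polynomial R :=
  aeval (fun i => Polynomial.C (P i) + Polynomial.C (w i) * Polynomial.X)

/-- Directional derivative. -/
noncomputable def ksDir (v : σ → ℝ) :
    Derivation ℝ (MvPolynomial σ ℝ) (MvPolynomial σ ℝ) :=
  mkDerivation ℝ (fun i => C (v i))

lemma ksDir_X (v : σ → ℝ) (i : σ) : ksDir v (X i) = C (v i) := by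
  simp [ksDir]

lemma ksDir_apply (v : σ → ℝ) (F : MvPolynomial σ ℝ) :
    ksDir v F = ∑ i, v i • pderiv i F := by
  induction F using MvPolynomial.induction_on with
  | C a => simp
  | add p q hp hq => simp [hp, hq, Finset.sum_add_distrib]
  | mul_X p i hp =>
    rw [Derivation.leibniz, hp, ksDir_X]
    have : ∀ j, v j • pderiv j (p * X i) =
        p * (C (v j) * if i = j then 1 else 0) + X i * (v j • pderiv j p) := by
      intro j
      rw [Derivation.leibniz, pderiv_X, MvPolynomial.smul_eq_C_mul, MvPolynomial.smul_eq_C_mul,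
        smul_eq_mul, smul_eq_mul, Pi.single_apply]
      ring
    simp only [this, Finset.sum_add_distrib, ← Finset.mul_sum, smul_eq_mul]
    congr 2
    simp

lemma ksDir_comm (v w : σ → ℝ) (F : MvPolynomial σ ℝ) :
    ksDir v (ksDir w F) = ksDir w (ksDir v F) := by
  have : ⁅ksDir v, ksDir w⁆ = 0 := by
    apply MvPolynomial.derivation_ext
    intro j
    rw [Derivation.commutator_apply, ksDir_X, ksDir_X]
    simp
  have h := congrArg (fun D => D F) this
  simp only [Derivation.commutator_apply, Derivation.coe_zero, Pi.zero_apply] at h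
  exact sub_eq_zero.1 h

lemma ksDir_add (v w : σ → ℝ) (F : MvPolynomial σ ℝ) :
    ksDir (v + w) F = ksDir v F + ksDir w F := by
  simp [ksDir_apply, add_smul, Finset.sum_add_distrib]

lemma ksDir_smul (c : ℝ) (w : σ → ℝ) (F : MvPolynomial σ ℝ) :
    ksDir (c • w) F = c • ksDir w F := by
  simp [ksDir_apply, mul_smul, Finset.smul_sum]

lemma ksDir_sum {κ : Type*} (s : Finset κ) (w : κ → σ → ℝ) (F : MvPolynomial σ ℝ) :
    ksDir (∑ j ∈ s, w j) F = ∑ j ∈ s, ksDir (w j) F := by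
  simp only [ksDir_apply, Finset.sum_apply, Finset.sum_smul]
  rw [Finset.sum_comm]

section
variable {R : Type*} [CommRing R] [Algebra ℝ R]

lemma ksLine_eval (P w : σ → R) (F : MvPolynomial σ ℝ) (s : R) :
    (ksLine P w F).eval s = aeval (fun i => P i + s * w i) F := by
  induction F using MvPolynomial.induction_on with
  | C a => simp [ksLine, Polynomial.algebraMap_apply]
  | add p q hp hq => simp [hp, hq]
  | mul_X p i hp =>
    rw [map_mul, Polynomial.eval_mul, hp, map_mul]
    simp [ksLine]
    ring

lemma ksLine_deriv (P : σ → R) (v : σ → ℝ) (F : MvPolynomial σ ℝ) :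
    Polynomial.derivative (ksLine P (fun i => algebraMap ℝ R (v i)) F) =
      ksLine P (fun i => algebraMap ℝ R (v i)) (ksDir v F) := by
  induction F using MvPolynomial.induction_on with
  | C a => simp [ksLine, Polynomial.algebraMap_apply]
  | add p q hp hq => simp [hp, hq]
  | mul_X p i hp =>
    rw [map_mul, Polynomial.derivative_mul, hp, Derivation.leibniz, ksDir_X]
    simp [ksLine, Polynomial.algebraMap_apply]
    ring
end

lemma ksLine_map (P w : σ → ℝ) (F : MvPolynomial σ ℝ) (z : ℂ) :
    Polynomial.aeval z (ksLine P w F) = aeval (fun i => (P i : ℂ) + z * w i) F := by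
  induction F using MvPolynomial.induction_on with
  | C a => simp [ksLine]
  | add p q hp hq => simp [hp, hq]
  | mul_X p i hp =>
    rw [map_mul, map_mul, hp, map_mul]
    simp [ksLine]
    left; ring

lemma ksLine_monomial (P w : σ → ℝ) (m : σ →₀ ℕ) (c : ℝ) :
    (ksLine P w (monomial m c)).natDegree ≤ m.degree ∧
    (ksLine P w (monomial m c)).coeff m.degree = eval w (monomial m c) := by
  have hX : ∀ i, (Polynomial.C (P i) + Polynomial.C (w i) * Polynomial.X).natDegree ≤ 1 := by
    intro i
    rw [add_comm]
    exact Polynomial.natDegree_linear_le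
  have hpow : ∀ i k, ((Polynomial.C (P i) + Polynomial.C (w i) * Polynomial.X) ^ k).natDegree ≤ k ∧
    ((Polynomial.C (P i) + Polynomial.C (w i) * Polynomial.X) ^ k).coeff k = w i ^ k := by
    intro i k
    refine ⟨?_, ?_⟩
    · simpa using Polynomial.natDegree_pow_le_of_le k (hX i)
    · have := Polynomial.coeff_pow_of_natDegree_le (m := k) (hX i)
      simp only [mul_one] at this
      rw [this]; simp
  have key : ∀ s : Finset σ,
      (∏ i ∈ s, (Polynomial.C (P i) + Polynomial.C (w i) * Polynomial.X) ^ (m i)).natDegree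
        ≤ ∑ i ∈ s, m i ∧
      (∏ i ∈ s, (Polynomial.C (P i) + Polynomial.C (w i) * Polynomial.X) ^ (m i)).coeff
        (∑ i ∈ s, m i) = ∏ i ∈ s, w i ^ m i := by
    intro s
    induction s using Finset.induction_on with
    | empty => simp
    | insert i s hi ih =>
      rw [Finset.prod_insert hi, Finset.sum_insert hi, Finset.prod_insert hi]
      refine ⟨Polynomial.natDegree_mul_le_of_le (hpow _ _).1 ih.1, ?_⟩
      rw [Polynomial.coeff_mul_add_eq_of_natDegree_le (hpow _ _).1 ih.1, (hpow _ _).2, ih.2]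
  have e1 : ksLine P w (monomial m c) = Polynomial.C c *
      ∏ i, (Polynomial.C (P i) + Polynomial.C (w i) * Polynomial.X) ^ (m i) := by
    rw [ksLine, aeval_monomial, Finsupp.prod_fintype _ _ (by simp)]
    rfl
  have e2 : m.degree = ∑ i, m i := Finsupp.degree_eq_sum m
  rw [e1, e2]
  refine ⟨(Polynomial.natDegree_C_mul_le _ _).trans (key _).1, ?_⟩
  rw [Polynomial.coeff_C_mul, (key _).2, eval_monomial, Finsupp.prod_fintype _ _ (by simp)]

lemma ksLine_degree_lt (P w : σ → ℝ) (F : MvPolynomial σ ℝ) (D : ℕ)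
    (h : ∀ m : σ →₀ ℕ, D ≤ m.degree → coeff m F = 0) : (ksLine P w F).degree < D := by
  rw [F.as_sum, map_sum]
  refine lt_of_le_of_lt (Polynomial.degree_sum_le _ _) ?_
  refine (Finset.sup_lt_iff (WithBot.bot_lt_coe D)).2 ?_
  intro m hm
  have : m.degree < D := by
    by_contra hh
    exact (mem_support_iff.1 hm) (h m (not_lt.1 hh))
  refine lt_of_le_of_lt Polynomial.degree_le_natDegree ?_
  exact WithBot.coe_lt_coe.2 (lt_of_le_of_lt (ksLine_monomial P w m _).1 this)

lemma ksLine_hom (P w : σ → ℝ) (F : MvPolynomial σ ℝ) (D : ℕ) (h : F.IsHomogeneous D) :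
    (ksLine P w F).natDegree ≤ D ∧ (ksLine P w F).coeff D = eval w F := by
  have hd : ∀ m ∈ F.support, m.degree = D := by
    intro m hm
    by_contra hh
    exact (mem_support_iff.1 hm) (h.coeff_eq_zero hh)
  rw [F.as_sum, map_sum, map_sum]
  refine ⟨Polynomial.natDegree_sum_le_of_forall_le _ _ ?_, ?_⟩
  · intro m hm
    rw [← hd m hm]
    exact (ksLine_monomial P w m _).1
  · rw [Polynomial.finsetSum_coeff]
    apply Finset.sum_congr rfl
    intro m hm
    rw [← hd m hm]
    exact (ksLine_monomial P w m _).2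

lemma ksDir_coeff (v : σ → ℝ) (F : MvPolynomial σ ℝ) (D : ℕ)
    (h : ∀ m : σ →₀ ℕ, D < m.degree → coeff m F = 0) (m : σ →₀ ℕ) (hm : D ≤ m.degree) :
    coeff m (ksDir v F) = 0 := by
  rw [ksDir_apply, coeff_sum]
  apply Finset.sum_eq_zero
  intro i _
  rw [coeff_smul, coeff_pderiv, h]
  · simp
  · simp; omega

/-- Stability with respect to the distinguished variable `o`, plus leading form control. -/
structure KS (o : σ) (D : ℕ) (F : MvPolynomial σ ℝ) : Prop where
  stab : ∀ z : σ → ℂ, 0 < (z o).im → (∀ i, 0 ≤ (z i).im) → aeval z F ≠ 0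
  top : ∃ T L : MvPolynomial σ ℝ, F = T + L ∧ T.IsHomogeneous D ∧
    (∀ w : σ → ℝ, (∀ i, 0 ≤ w i) → 0 < w o → 0 < eval w T) ∧
    ∀ m : σ →₀ ℕ, D ≤ m.degree → coeff m L = 0

variable {o : σ} {D : ℕ} {F : MvPolynomial σ ℝ}

lemma KS.coeff_gt (h : KS o D F) (m : σ →₀ ℕ) (hm : D < m.degree) : coeff m F = 0 := by
  obtain ⟨T, L, rfl, hT, -, hL⟩ := h.top
  rw [coeff_add, hL m hm.le, hT.coeff_eq_zero hm.ne', add_zero]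

/-- logarithmic derivative at complex points -/
lemma KS.logd (h : KS o D F) (v : σ → ℝ) (hv : ∀ i, 0 ≤ v i) (z : σ → ℂ)
    (hz : 0 < (z o).im) (hz' : ∀ i, 0 ≤ (z i).im) :
    aeval z (ksDir v F) / aeval z F ≠ 1 ∧ (aeval z (ksDir v F) / aeval z F).im ≤ 0 := by
  set G : Polynomial ℂ := ksLine z (fun i => algebraMap ℝ ℂ (v i)) F with hG
  have e0 : G.eval 0 = aeval z F := by
    rw [hG, ksLine_eval]; simp
  have e1 : (Polynomial.derivative G).eval 0 = aeval z (ksDir v F) := by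
    rw [hG, ksLine_deriv, ksLine_eval]; simp
  have hne : G.eval 0 ≠ 0 := by rw [e0]; exact h.stab z hz hz'
  have hroots : ∀ r ∈ G.roots, r.im < 0 := by
    intro r hr
    by_contra hh
    push Not at hh
    have hr' := Polynomial.isRoot_of_mem_roots hr
    rw [Polynomial.IsRoot, hG, ksLine_eval] at hr'
    refine h.stab _ ?_ ?_ hr'
    · simp
      have := mul_nonneg hh (hv o)
      linarith
    · intro i
      simp
      have := mul_nonneg hh (hv i)
      linarith [hz' i]
  have hsum := (IsAlgClosed.splits G).eval_derivative_div_eval_of_ne_zero hne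
  rw [e0, e1] at hsum
  have key : ∀ M : Multiset ℂ, (∀ r ∈ M, r.im < 0) →
      ((M.map (fun r => 1 / (0 - r))).sum.im ≤ 0 ∧
      (M.map (fun r => 1 / (0 - r))).sum ≠ 1) := by
    have hterm : ∀ r : ℂ, r.im < 0 → (1 / (0 - r)).im < 0 := by
      intro r hr
      have h0 : 0 < Complex.normSq r := Complex.normSq_pos.2 (by
        rintro rfl; simp at hr)
      rw [zero_sub, one_div, Complex.inv_im]
      simp
      exact div_neg_of_neg_of_pos hr h0
    have hle : ∀ M : Multiset ℂ, (∀ r ∈ M, r.im < 0) →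
        (M.map (fun r => 1 / (0 - r))).sum.im ≤ 0 := by
      intro M
      induction M using Multiset.induction_on with
      | empty => simp
      | cons r M ih =>
        intro hM
        rw [Multiset.map_cons, Multiset.sum_cons, Complex.add_im]
        have := ih (fun s hs => hM s (Multiset.mem_cons_of_mem hs))
        have := hterm r (hM r (Multiset.mem_cons_self r M))
        linarith
    intro M hM
    refine ⟨hle M hM, ?_⟩
    induction M using Multiset.induction_on with
    | empty => simp
    | cons r M ih =>
      intro heq
      have := congrArg Complex.im heq
      rw [Multiset.map_cons, Multiset.sum_cons, Complex.add_im] at this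
      have h1 := hle M (fun s hs => hM s (Multiset.mem_cons_of_mem hs))
      have h2 := hterm r (hM r (Multiset.mem_cons_self r M))
      rw [Complex.one_im] at this
      linarith
  rw [hsum]
  exact ⟨(key _ hroots).2, (key _ hroots).1⟩

lemma KS.sub (h : KS o D F) (v : σ → ℝ) (hv : ∀ i, 0 ≤ v i) : KS o D (F - ksDir v F) := by
  refine ⟨?_, ?_⟩
  · intro z hz hz' h0
    rw [map_sub, sub_eq_zero] at h0
    apply (h.logd v hv z hz hz').1
    rw [← h0, div_self (h.stab z hz hz')]
  · have hc := ksDir_coeff v F D h.coeff_gt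
    obtain ⟨T, L, hF, hT, hpos, hL⟩ := h.top
    refine ⟨T, L - ksDir v F, ?_, hT, hpos, ?_⟩
    · rw [← add_sub_assoc, ← hF]
    · intro m hm
      rw [coeff_sub, hL m hm, hc m hm, sub_zero]

/-- Real-rootedness of restrictions and the partial fraction representation. -/
lemma KS.rep (h : KS o D F) (P w v : σ → ℝ) (hw : ∀ i, 0 ≤ w i) (hwo : 0 < w o)
    (hv : ∀ i, 0 ≤ v i) :
    (ksLine P w F).Splits ∧ 0 < (ksLine P w F).leadingCoeff ∧
    ∃ c : ℝ → ℝ, (∀ s, 0 ≤ c s) ∧ ∀ x, (ksLine P w F).eval x ≠ 0 →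
      (ksLine P w (ksDir v F)).eval x =
        (ksLine P w F).eval x * ∑ s ∈ (ksLine P w F).roots.toFinset, c s / (x - s) := by
  have hdegb : (ksLine P w F).degree = D ∧ 0 < (ksLine P w F).leadingCoeff := by
    obtain ⟨T, L, hF, hT, hpos, hL⟩ := h.top
    have h1 := ksLine_hom P w T D hT
    have h2 := ksLine_degree_lt P w L D hL
    have hp := hpos w hw hwo
    rw [← h1.2] at hp
    have hT' : (ksLine P w T).degree = D := by
      apply le_antisymm
      · exact Polynomial.degree_le_of_natDegree_le h1.1
      · exact Polynomial.le_degree_of_ne_zero hp.ne'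
    have hlt : (ksLine P w L).degree < (ksLine P w T).degree := by rw [hT']; exact h2
    rw [hF, map_add]
    refine ⟨by rw [Polynomial.degree_add_eq_left_of_degree_lt hlt, hT'], ?_⟩
    rw [Polynomial.leadingCoeff_add_of_degree_lt' hlt, Polynomial.leadingCoeff,
      Polynomial.natDegree_eq_of_degree_eq_some hT']
    exact hp
  have hb0 : ksLine P w F ≠ 0 := by
    intro h0; rw [h0] at hdegb; simp at hdegb
  have hU : ∀ z : ℂ, 0 < z.im → Polynomial.aeval z (ksLine P w F) ≠ 0 := by
    intro z hz
    rw [ksLine_map]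
    apply h.stab
    · simp; positivity
    · intro i; simp; exact mul_nonneg hz.le (hw i)
  have hsp : (ksLine P w F).Splits := by
    refine Polynomial.Splits.of_splits_map (algebraMap ℝ ℂ) (IsAlgClosed.splits _) ?_
    intro z hz
    have hz0 : Polynomial.aeval z (ksLine P w F) = 0 := by
      have := Polynomial.isRoot_of_mem_roots hz
      rwa [Polynomial.IsRoot, Polynomial.eval_map_algebraMap] at this
    have him : z.im = 0 := by
      rcases lt_trichotomy z.im 0 with h1 | h1 | h1
      · exfalso
        apply hU (starRingEnd ℂ z) (by simpa using h1)
        rw [Polynomial.aeval_conj, hz0, map_zero]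
      · exact h1
      · exact absurd hz0 (hU z h1)
    exact ⟨z.re, by apply Complex.ext <;> simp [him]⟩
  refine ⟨hsp, hdegb.2, ?_⟩
  apply ks_pf _ _ _ rfl hb0 hsp
  · rw [hdegb.1]
    exact ksLine_degree_lt P w _ D (ksDir_coeff v F D h.coeff_gt)
  · intro z hz
    rw [ksLine_map, ksLine_map]
    set zz : σ → ℂ := fun i => (P i : ℂ) + z * w i with hzz
    have hz1 : 0 < (zz o).im := by simp [hzz]; positivity
    have hz2 : ∀ i, 0 ≤ (zz i).im := by
      intro i; simp [hzz]; exact mul_nonneg hz.le (hw i)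
    have hl := (h.logd v hv zz hz1 hz2).2
    have hne := h.stab zz hz1 hz2
    have e : aeval zz (ksDir v F) * starRingEnd ℂ (aeval zz F) =
        ((Complex.normSq (aeval zz F) : ℝ) : ℂ) * (aeval zz (ksDir v F) / aeval zz F) := by
      rw [Complex.normSq_eq_conj_mul_self]
      field_simp
    rw [e, Complex.im_ofReal_mul]
    exact mul_nonpos_of_nonneg_of_nonpos (Complex.normSq_nonneg _) hl

end Part2

section Part3
open MvPolynomial
set_option linter.unusedSectionVars false

lemma ks_uni (a b : Polynomial ℝ) (c : ℝ → ℝ) (hc : ∀ s, 0 ≤ c s)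
    (hrep : ∀ x, b.eval x ≠ 0 →
      a.eval x = b.eval x * ∑ s ∈ b.roots.toFinset, c s / (x - s))
    (hb : ∀ x, 0 ≤ x → b.eval x ≠ 0) :
    (∀ x, 0 ≤ x → 0 ≤ a.eval x / b.eval x) ∧
    (∀ x y, 0 ≤ x → x ≤ y → a.eval y / b.eval y ≤ a.eval x / b.eval x) ∧
    ∀ x, 0 ≤ x →
      ((Polynomial.derivative a).eval x * b.eval x - a.eval x * (Polynomial.derivative b).eval x)
        / b.eval x ^ 2 ≤ 0 ∧
      a.eval x / b.eval x - x *
      (((Polynomial.derivative a).eval x * b.eval x - a.eval x * (Polynomial.derivative b).eval x)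
        / b.eval x ^ 2) ≤ a.eval 0 / b.eval 0 := by
  have hs : ∀ s ∈ b.roots.toFinset, s < 0 := by
    intro s hs
    rw [Multiset.mem_toFinset] at hs
    by_contra hh
    exact hb s (not_lt.1 hh) (Polynomial.isRoot_of_mem_roots hs)
  have hg : ∀ x, b.eval x ≠ 0 →
      a.eval x / b.eval x = ∑ s ∈ b.roots.toFinset, c s / (x - s) := by
    intro x hx
    rw [hrep x hx]
    field_simp
  refine ⟨?_, ?_, ?_⟩
  · intro x hx
    rw [hg x (hb x hx)]
    apply Finset.sum_nonneg
    intro s hs'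
    have := hs s hs'
    exact div_nonneg (hc s) (by linarith)
  · intro x y hx hxy
    rw [hg x (hb x hx), hg y (hb y (hx.trans hxy))]
    apply Finset.sum_le_sum
    intro s hs'
    have := hs s hs'
    exact div_le_div_of_nonneg_left (hc s) (by linarith) (by linarith)
  · intro x hx
    have hbx := hb x hx
    have hd1 : HasDerivAt (fun y => ∑ s ∈ b.roots.toFinset, c s / (y - s))
        (∑ s ∈ b.roots.toFinset, - (c s / (x - s) ^ 2)) x := by
      apply HasDerivAt.fun_sum
      intro s hs'
      have h0 := hs s hs'
      have hne : x - s ≠ 0 := by linarith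
      have := ((hasDerivAt_const x (c s)).div ((hasDerivAt_id x).sub_const s) hne)
      refine HasDerivAt.congr_deriv (f := fun y => c s / (y - s)) this ?_
      simp only [id, zero_mul, zero_sub, mul_one]
      ring
    have hd2 := (a.hasDerivAt x).div (b.hasDerivAt x) hbx
    have hev : (fun y => a.eval y / b.eval y) =ᶠ[nhds x]
        (fun y => ∑ s ∈ b.roots.toFinset, c s / (y - s)) := by
      have : ∀ᶠ y in nhds x, b.eval y ≠ 0 :=
        (b.continuous.continuousAt).eventually_ne hbx
      filter_upwards [this] with y hy
      exact hg y hy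
    have huniq := hd2.unique (hd1.congr_of_eventuallyEq hev)
    rw [huniq]
    refine ⟨?_, ?_⟩
    · apply Finset.sum_nonpos
      intro s hs'
      have := hc s
      have : 0 ≤ c s / (x - s) ^ 2 := by positivity
      linarith
    · rw [hg x hbx, hg 0 (hb 0 le_rfl), Finset.mul_sum, ← Finset.sum_sub_distrib]
      apply Finset.sum_le_sum
      intro s hs'
      have h0 := hs s hs'
      have h1 : 0 < x - s := by linarith
      have h2 : 0 < 0 - s := by linarith
      have e : c s / (x - s) - x * -(c s / (x - s) ^ 2) = c s * (1 / (x - s) + x / (x - s) ^ 2) := by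
        ring
      rw [e, div_eq_mul_inv (c s)]
      apply mul_le_mul_of_nonneg_left _ (hc s)
      rw [← one_div]
      have e2 : 1 / (x - s) + x / (x - s) ^ 2 = (2 * x - s) / (x - s) ^ 2 := by
        field_simp; ring
      rw [e2, div_le_div_iff₀ (by positivity) h2]
      nlinarith [sq_nonneg x]

variable {σ : Type*} [Fintype σ] [DecidableEq σ] {o : σ} {D : ℕ} {F : MvPolynomial σ ℝ}

/-- `F` is positive on `P + (nonnegative orthant)`. -/
def KSAbove (F : MvPolynomial σ ℝ) (P : σ → ℝ) : Prop :=
  ∀ u : σ → ℝ, (∀ i, 0 ≤ u i) → 0 < eval (P + u) F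

/-- barrier function -/
noncomputable def ksPhi (F : MvPolynomial σ ℝ) (v P : σ → ℝ) : ℝ :=
  eval P (ksDir v F) / eval P F

/-- derivative of the barrier function in direction `w` -/
noncomputable def ksPsi (F : MvPolynomial σ ℝ) (v w P : σ → ℝ) : ℝ :=
  (eval P (ksDir w (ksDir v F)) * eval P F - eval P (ksDir v F) * eval P (ksDir w F))
    / eval P F ^ 2

lemma ksLine_eval_real (P w : σ → ℝ) (F : MvPolynomial σ ℝ) (s : ℝ) :
    (ksLine P w F).eval s = eval (P + s • w) F := by
  rw [ksLine_eval, MvPolynomial.aeval_eq_eval]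
  rfl

lemma ksLine_deriv_real (P w : σ → ℝ) (F : MvPolynomial σ ℝ) :
    Polynomial.derivative (ksLine P w F) = ksLine P w (ksDir w F) :=
  ksLine_deriv P w F

lemma KS.barrier_strict (h : KS o D F) {P v w : σ → ℝ} (hP : KSAbove F P)
    (hv : ∀ i, 0 ≤ v i) (hw : ∀ i, 0 ≤ w i) (hwo : 0 < w o) {δ : ℝ} (hδ : 0 ≤ δ) :
    0 ≤ ksPhi F v P ∧ ksPhi F v (P + δ • w) ≤ ksPhi F v P ∧
    ksPsi F v w (P + δ • w) ≤ 0 ∧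
    ksPhi F v (P + δ • w) - δ * ksPsi F v w (P + δ • w) ≤ ksPhi F v P := by
  obtain ⟨-, -, c, hc, hrep⟩ := h.rep P w v hw hwo hv
  have hb : ∀ x, 0 ≤ x → (ksLine P w F).eval x ≠ 0 := by
    intro x hx
    rw [ksLine_eval_real]
    exact (hP _ (fun i => mul_nonneg hx (hw i))).ne'
  obtain ⟨h1, h2, h3⟩ := ks_uni _ _ c hc hrep hb
  have h1 := h1 0 le_rfl
  have h2 := h2 0 δ le_rfl hδ
  have h3 := h3 δ hδ
  simp only [ksLine_deriv_real, ksLine_eval_real, zero_smul, add_zero] at h1 h2 h3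
  exact ⟨h1, h2, h3.1, h3.2⟩

lemma KS.barrier (h : KS o D F) {P v w : σ → ℝ} (hP : KSAbove F P)
    (hv : ∀ i, 0 ≤ v i) (hw : ∀ i, 0 ≤ w i) {δ : ℝ} (hδ : 0 ≤ δ) :
    0 ≤ ksPhi F v P ∧ ksPhi F v (P + δ • w) ≤ ksPhi F v P ∧
    ksPsi F v w (P + δ • w) ≤ 0 ∧
    ksPhi F v (P + δ • w) - δ * ksPsi F v w (P + δ • w) ≤ ksPhi F v P := by
  set W : ℝ → σ → ℝ := fun η => w + η • Pi.single o 1 with hW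
  have hW0 : W 0 = w := by simp [hW]
  have hWnn : ∀ η, 0 < η → (∀ i, 0 ≤ W η i) ∧ 0 < W η o := by
    intro η hη
    constructor
    · intro i
      have : (0:ℝ) ≤ (Pi.single o 1 : σ → ℝ) i := by
        rw [Pi.single_apply]; split_ifs <;> norm_num
      simp only [hW, Pi.add_apply, Pi.smul_apply, smul_eq_mul]
      have := hw i
      positivity
    · simp [hW]
      have := hw o
      linarith
  have hall := fun η (hη : 0 < η) => h.barrier_strict hP hv (hWnn η hη).1 (hWnn η hη).2 hδ
  have hQ : Continuous (fun η => P + δ • W η) := by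
    simp only [hW]; fun_prop
  have hpos : eval (P + δ • W 0) F ≠ 0 := by
    rw [hW0]; exact (hP _ (fun i => mul_nonneg hδ (hw i))).ne'
  have hev : ∀ G : MvPolynomial σ ℝ, ContinuousAt (fun η => eval (P + δ • W η) G) 0 :=
    fun G => ((MvPolynomial.continuous_eval G).comp hQ).continuousAt
  have c1 : ContinuousAt (fun η => ksPhi F v (P + δ • W η)) 0 :=
    (hev _).div (hev _) hpos
  have hdir : ∀ G : MvPolynomial σ ℝ,
      ContinuousAt (fun η => eval (P + δ • W η) (ksDir (W η) G)) 0 := by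
    intro G
    have : (fun η => eval (P + δ • W η) (ksDir (W η) G)) = fun η =>
        eval (P + δ • W η) (ksDir w G) + η * eval (P + δ • W η) (ksDir (Pi.single o 1) G) := by
      funext η
      have : ksDir (W η) G = ksDir w G + η • ksDir (Pi.single o 1) G := by
        rw [hW, ksDir_add, ksDir_smul]
      rw [this, map_add, MvPolynomial.smul_eval]
    rw [this]
    exact (hev _).add (continuousAt_id.mul (hev _))
  have c2 : ContinuousAt (fun η => ksPsi F v (W η) (P + δ • W η)) 0 :=
    (((hdir _).mul (hev _)).sub ((hev _).mul (hdir _))).div ((hev _).pow 2) (pow_ne_zero 2 hpos)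
  have hin : ∀ᶠ η in nhdsWithin (0:ℝ) (Set.Ioi 0), η ∈ Set.Ioi (0:ℝ) := self_mem_nhdsWithin
  have lim : ∀ (f : ℝ → ℝ) (B : ℝ), ContinuousAt f 0 → (∀ η, 0 < η → f η ≤ B) → f 0 ≤ B := by
    intro f B hf hB
    refine le_of_tendsto (hf.tendsto.mono_left (nhdsWithin_le_nhds (s := Set.Ioi 0))) ?_
    filter_upwards [hin] with η hη using hB η hη
  refine ⟨(hall 1 one_pos).1, ?_, ?_, ?_⟩
  · have := lim _ _ c1 (fun η hη => (hall η hη).2.1)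
    rwa [hW0] at this
  · have := lim _ _ c2 (fun η hη => (hall η hη).2.2.1)
    rwa [hW0] at this
  · have := lim _ _ (c1.sub (continuousAt_const.mul c2)) (fun η hη => (hall η hη).2.2.2)
    simp only [Pi.sub_apply, Pi.mul_apply] at this
    rwa [hW0] at this

/-- One step of the barrier argument. -/
lemma KS.step (h : KS o D F) {P v : σ → ℝ} (hP : KSAbove F P)
    (hv : ∀ i, 0 ≤ v i) {δ : ℝ} (hδ : 0 < δ) (hphi : ksPhi F v P ≤ 1 - 1 / δ) :
    KSAbove (F - ksDir v F) (P + δ • v) ∧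
    ∀ v' : σ → ℝ, (∀ i, 0 ≤ v' i) → ksPhi (F - ksDir v F) v' (P + δ • v) ≤ ksPhi F v' P := by
  have hδ' : 0 < 1 / δ := by positivity
  have hmain : ∀ u : σ → ℝ, (∀ i, 0 ≤ u i) → 0 < eval (P + u) F ∧
      eval (P + u) (ksDir v F) ≤ (1 - 1 / δ) * eval (P + u) F := by
    intro u hu
    have h1 := hP u hu
    have h2 := (h.barrier hP hv hu zero_le_one).2.1
    rw [one_smul] at h2
    have h3 : ksPhi F v (P + u) ≤ 1 - 1 / δ := h2.trans hphi
    rw [ksPhi, div_le_iff₀ h1] at h3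
    exact ⟨h1, h3⟩
  refine ⟨?_, ?_⟩
  · intro u hu
    have := hmain (δ • v + u) (fun i => add_nonneg (mul_nonneg hδ.le (hv i)) (hu i))
    rw [← add_assoc] at this
    rw [map_sub]
    nlinarith [this.1, this.2, mul_pos hδ' this.1]
  · intro v' hv'
    obtain ⟨-, -, h3, h4⟩ := h.barrier hP hv' hv hδ.le
    obtain ⟨hf, hp⟩ := hmain (δ • v) (fun i => mul_nonneg hδ.le (hv i))
    refine le_trans ?_ h4
    rw [ksPhi, map_sub, map_sub, map_sub, ksDir_comm v' v F]
    rw [ksPsi] at h3 ⊢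
    rw [ksPhi]
    set f := eval (P + δ • v) F
    set p := eval (P + δ • v) (ksDir v F)
    set a := eval (P + δ • v) (ksDir v' F)
    set k := eval (P + δ • v) (ksDir v (ksDir v' F))
    have hfp : f / δ ≤ f - p := by
      have : (1 - 1 / δ) * f = f - f / δ := by ring
      linarith
    have hfp0 : 0 < f - p := lt_of_lt_of_le (by positivity) hfp
    have e : (a - k) / (f - p) = a / f - (k * f - a * p) / f ^ 2 * (f / (f - p)) := by
      field_simp
      ring
    rw [e]
    have h5 : f / (f - p) ≤ δ := by
      rw [div_le_iff₀ hfp0]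
      rw [div_le_iff₀ hδ] at hfp
      linarith
    nlinarith [mul_le_mul_of_nonpos_left h5 h3]

/-- Selection step. -/
lemma KS.select (h : KS o D F) {P : σ → ℝ} {κ : Type*} [Fintype κ] (t : κ → ℝ)
    (ht : ∀ j, 0 < t j) (hts : ∑ j, t j = 1) (w : κ → σ → ℝ) (hw : ∀ j i, 0 ≤ w j i)
    (hab : ∀ s : ℝ, 0 ≤ s → 0 < eval (P + s • (Pi.single o 1 : σ → ℝ))
      (F - ksDir (∑ j, t j • w j) F)) :
    ∃ j, ∀ s : ℝ, 0 ≤ s → 0 < eval (P + s • (Pi.single o 1 : σ → ℝ)) (F - ksDir (w j) F) := by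
  classical
  set e : σ → ℝ := Pi.single o 1 with he
  have he0 : ∀ i, 0 ≤ e i := by
    intro i; rw [he, Pi.single_apply]; split_ifs <;> norm_num
  have heo : 0 < e o := by simp [he]
  set b := ksLine P e F with hb
  have hvnn : ∀ i, 0 ≤ (∑ j, t j • w j) i := by
    intro i
    rw [Finset.sum_apply]
    exact Finset.sum_nonneg (fun j _ => mul_nonneg (ht j).le (hw j i))
  obtain ⟨hsp, hlead, c, hc, hrep⟩ := h.rep P e _ he0 heo hvnn
  have hb0 : b ≠ 0 := by
    intro h0
    rw [← hb, h0] at hlead; simp at hlead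
  have hbpos : ∀ x, (∀ s ∈ b.roots, s < x) → 0 < b.eval x := by
    intro x hx
    rw [hsp.eval_eq_prod_roots x]
    refine mul_pos hlead ?_
    refine Multiset.prod_pos ?_
    intro y hy
    obtain ⟨s, hs, rfl⟩ := Multiset.mem_map.1 hy
    exact sub_pos.2 (hx s hs)
  have hneg : ∀ s ∈ b.roots, s < 0 := by
    by_contra hcon
    push Not at hcon
    obtain ⟨s0, hs0, hs0'⟩ := hcon
    obtain ⟨l, hl, hmax⟩ := b.roots.toFinset.exists_max_image id ⟨s0, Multiset.mem_toFinset.2 hs0⟩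
    have hl0 : 0 ≤ l := hs0'.trans (hmax s0 (Multiset.mem_toFinset.2 hs0))
    have hbl : b.eval l = 0 := Polynomial.isRoot_of_mem_roots (Multiset.mem_toFinset.1 hl)
    have hal : 0 ≤ (ksLine P e (ksDir (∑ j, t j • w j) F)).eval l := by
      have hlim := ((ksLine P e (ksDir (∑ j, t j • w j) F)).continuous.tendsto l).mono_left
        (nhdsWithin_le_nhds (s := Set.Ioi l))
      refine ge_of_tendsto hlim ?_
      filter_upwards [self_mem_nhdsWithin] with x hx
      have hx' : ∀ s ∈ b.roots, s < x := fun s hs =>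
        lt_of_le_of_lt (hmax s (Multiset.mem_toFinset.2 hs)) hx
      rw [hrep x (hbpos x hx').ne']
      refine mul_nonneg (hbpos x hx').le (Finset.sum_nonneg ?_)
      intro s hs
      have := hx' s (Multiset.mem_toFinset.1 hs)
      exact div_nonneg (hc s) (by linarith)
    have := hab l hl0
    rw [map_sub, ← ksLine_eval_real, ← ksLine_eval_real] at this
    rw [hb] at hbl
    linarith
  have hbp : ∀ x, 0 ≤ x → 0 < b.eval x := fun x hx =>
    hbpos x (fun s hs => lt_of_lt_of_le (hneg s hs) hx)
  have hex : ∃ j, (ksLine P e (ksDir (w j) F)).eval 0 < b.eval 0 := by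
    by_contra hcon
    push Not at hcon
    have h0 := hab 0 le_rfl
    rw [map_sub, ← ksLine_eval_real, ← ksLine_eval_real, ← hb, ksDir_sum, map_sum,
      Polynomial.eval_finsetSum] at h0
    have : b.eval 0 ≤ ∑ j, (ksLine P e (ksDir (t j • w j) F)).eval 0 := by
      calc b.eval 0 = ∑ j, t j * b.eval 0 := by rw [← Finset.sum_mul, hts, one_mul]
        _ ≤ _ := by
          apply Finset.sum_le_sum
          intro j _
          rw [ksDir_smul, map_smul, Polynomial.eval_smul, smul_eq_mul]
          exact mul_le_mul_of_nonneg_left (hcon j) (ht j).le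
    linarith
  obtain ⟨j, hj⟩ := hex
  refine ⟨j, ?_⟩
  intro s hs
  obtain ⟨-, -, c', hc', hrep'⟩ := h.rep P e _ he0 heo (hw j)
  have h2 := (ks_uni _ _ c' hc' hrep' (fun x hx => (hbp x hx).ne')).2.1 0 s le_rfl hs
  rw [map_sub, ← ksLine_eval_real, ← ksLine_eval_real, ← hb, sub_pos]
  rw [← hb] at h2
  have h3 : (ksLine P e (ksDir (w j) F)).eval 0 / b.eval 0 < 1 := by
    rw [div_lt_one (hbp 0 le_rfl)]; exact hj
  rw [← div_lt_one (hbp s hs)]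
  exact lt_of_le_of_lt h2 h3

end Part3

section Part4
open MvPolynomial
set_option linter.unusedSectionVars false

variable {σ : Type*} [Fintype σ] [DecidableEq σ] {o : σ} {D : ℕ} {F : MvPolynomial σ ℝ}

/-- Apply the operators `1 - D_v` for all `v` in a list. -/
noncomputable def ksOps : List (σ → ℝ) → MvPolynomial σ ℝ → MvPolynomial σ ℝ
  | [], F => F
  | v :: l, F => ksOps l (F - ksDir v F)

lemma KS.ops (l : List (σ → ℝ)) : ∀ {F : MvPolynomial σ ℝ}, KS o D F →
    (∀ v ∈ l, ∀ i, 0 ≤ v i) → KS o D (ksOps l F) := by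
  induction l with
  | nil => intro F h _; exact h
  | cons v l ih =>
    intro F h hl
    exact ih (h.sub v (hl v (by simp))) (fun w hw => hl w (by simp [hw]))

lemma ksOps_dir (l : List (σ → ℝ)) (v : σ → ℝ) : ∀ (F : MvPolynomial σ ℝ),
    ksOps l (F - ksDir v F) = ksOps l F - ksDir v (ksOps l F) := by
  induction l with
  | nil => intro F; simp only [ksOps]
  | cons w l ih =>
    intro F
    rw [ksOps, ksOps]
    have e : F - ksDir v F - ksDir w (F - ksDir v F) =
        (F - ksDir w F) - ksDir v (F - ksDir w F) := by
      rw [map_sub, map_sub, ksDir_comm w v]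
      generalize ksDir v (ksDir w F) = A
      generalize ksDir v F = B
      generalize ksDir w F = C
      abel
    rw [e, ih]

lemma KS.ops_above (l : List (σ → ℝ)) {δ : ℝ} (hδ : 0 < δ) :
    ∀ {F : MvPolynomial σ ℝ} {P : σ → ℝ}, KS o D F → KSAbove F P →
    (∀ v ∈ l, ∀ i, 0 ≤ v i) → (∀ v ∈ l, ksPhi F v P ≤ 1 - 1 / δ) →
    KSAbove (ksOps l F) (P + δ • l.sum) := by
  induction l with
  | nil => intro F P h hP _ _; simpa [ksOps] using hP
  | cons v l ih =>
    intro F P h hP hl hphi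
    have hv := hl v (by simp)
    obtain ⟨h1, h2⟩ := h.step hP hv hδ (hphi v (by simp))
    have := ih (h.sub v hv) h1 (fun w hw => hl w (by simp [hw]))
      (fun w hw => (h2 w (hl w (by simp [hw]))).trans (hphi w (by simp [hw])))
    simpa [ksOps, add_assoc] using this

lemma KS.ops_select {ι κ : Type*} [DecidableEq ι] [Fintype κ] [Nonempty κ] (t : κ → ℝ)
    (ht : ∀ j, 0 < t j) (hts : ∑ j, t j = 1) (w : ι → κ → σ → ℝ) (hw : ∀ i j k, 0 ≤ w i j k)
    (P : σ → ℝ) (l : List ι) : l.Nodup → ∀ {F : MvPolynomial σ ℝ}, KS o D F →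
    (∀ s : ℝ, 0 ≤ s → 0 < eval (P + s • (Pi.single o 1 : σ → ℝ))
      (ksOps (l.map fun i => ∑ j, t j • w i j) F)) →
    ∃ c : ι → κ, ∀ s : ℝ, 0 ≤ s → 0 < eval (P + s • (Pi.single o 1 : σ → ℝ))
      (ksOps (l.map fun i => w i (c i)) F) := by
  have hV : ∀ i k, 0 ≤ (∑ j, t j • w i j) k := by
    intro i k
    rw [Finset.sum_apply]
    exact Finset.sum_nonneg (fun j _ => mul_nonneg (ht j).le (hw i j k))
  induction l with
  | nil => intro _ F h hp; exact ⟨fun _ => Classical.arbitrary κ, by simpa using hp⟩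
  | cons i l ih =>
    intro hnd F h hp
    rw [List.nodup_cons] at hnd
    simp only [List.map_cons, ksOps, ksOps_dir] at hp
    have hG : KS o D (ksOps (l.map fun i => ∑ j, t j • w i j) F) := by
      apply KS.ops _ h
      intro v hv
      obtain ⟨i', _, rfl⟩ := List.mem_map.1 hv
      exact hV i'
    obtain ⟨j, hj⟩ := hG.select t ht hts (w i) (hw i) hp
    simp only [← ksOps_dir] at hj
    obtain ⟨c, hc⟩ := ih hnd.2 (h.sub (w i j) (hw i j)) hj
    refine ⟨Function.update c i j, ?_⟩
    have : (l.map fun i' => w i' (Function.update c i j i')) = l.map fun i' => w i' (c i') := by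
      apply List.map_congr_left
      intro i' hi'
      have hne : i' ≠ i := by
        rintro rfl
        exact hnd.1 hi'
      rw [Function.update_of_ne hne]
    simpa [ksOps, this] using hc

lemma ks_affine_line (F : MvPolynomial σ ℝ) (v P : σ → ℝ) (h : ksDir v (ksDir v F) = 0) :
    eval (P - v) F = eval P (F - ksDir v F) := by
  set q := ksLine P v F with hq
  have h1 : Polynomial.derivative q = ksLine P v (ksDir v F) := ksLine_deriv_real P v F
  have h2 : Polynomial.derivative (Polynomial.derivative q) = 0 := by
    rw [h1, ksLine_deriv_real, h, map_zero]
  have h3 := Polynomial.derivative_eq_zero.1 h2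
  obtain ⟨a, ha⟩ := Polynomial.natDegree_eq_zero.1 h3
  have h4 : Polynomial.derivative (q - Polynomial.C a * Polynomial.X) = 0 := by
    rw [Polynomial.derivative_sub, ← ha]; simp
  obtain ⟨b, hb⟩ := Polynomial.natDegree_eq_zero.1
    (Polynomial.derivative_eq_zero.1 h4)
  have hqe : q = Polynomial.C a * Polynomial.X + Polynomial.C b := by rw [hb]; ring
  have e1 : q.eval (-1) = eval (P - v) F := by
    rw [hq, ksLine_eval_real]; congr 1; simp [sub_eq_add_neg]
  have e2 : q.eval 0 = eval P F := by
    rw [hq, ksLine_eval_real]; simp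
  have e3 : (Polynomial.derivative q).eval 0 = eval P (ksDir v F) := by
    rw [h1, ksLine_eval_real]; simp
  rw [map_sub, ← e1, ← e2, ← e3, ← ha, hqe]
  simp
  ring

lemma ksOps_eval (P : σ → ℝ) (l : List (σ → ℝ)) : ∀ (F : MvPolynomial σ ℝ),
    (∀ v ∈ l, ksDir v (ksDir v F) = 0) → eval P (ksOps l F) = eval (P - l.sum) F := by
  induction l with
  | nil => intro F _; simp [ksOps]
  | cons v l ih =>
    intro F h
    rw [ksOps, ih, ← ks_affine_line F v _ (h v (by simp))]
    · congr 1; simp [sub_sub, add_comm]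
    · intro w hw
      rw [map_sub, map_sub, h w (by simp [hw]), ksDir_comm w v, ksDir_comm w v, h w (by simp [hw])]
      simp

end Part4

section Part5
open MvPolynomial Matrix
open scoped ComplexOrder

lemma ks_det_rank_one {n : Type*} [Fintype n] [DecidableEq n] (M : Matrix n n ℂ) (a b : n → ℂ) :
    ∃ c : ℂ, ∀ s : ℂ, (M + s • vecMulVec a b).det = M.det + s * c := by
  set N : Matrix (n ⊕ Unit) (n ⊕ Unit) ℂ :=
    fromBlocks M 0 (replicateRow Unit b) 1 with hN
  refine ⟨(N.updateCol (Sum.inr ()) (Sum.elim (-a) 0)).det, fun s => ?_⟩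
  have h1 : N.updateCol (Sum.inr ()) (s • Sum.elim (-a) 0 +
      Sum.elim (0 : n → ℂ) (1 : Unit → ℂ)) =
      fromBlocks M (-(s • replicateCol Unit a)) (replicateRow Unit b) 1 := by
    ext i j
    rcases i with i | i <;> rcases j with j | j <;> simp [hN]
  have h2 : N.updateCol (Sum.inr ()) (Sum.elim (0 : n → ℂ) (1 : Unit → ℂ)) = N := by
    ext i j
    rcases i with i | i <;> rcases j with j | j <;> simp [hN]
  have h3 := det_fromBlocks_one₂₂ M (-(s • replicateCol Unit a)) (replicateRow Unit b)
  rw [← h1, det_updateCol_add, det_updateCol_smul, h2] at h3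
  have h4 : N.det = M.det := by rw [hN, det_fromBlocks_one₂₂]; simp
  rw [h4] at h3
  rw [vecMulVec_eq Unit, ← add_comm (s * _), h3]
  simp [sub_eq_add_neg]

lemma outer_eq {d : ℕ} (u : EuclideanSpace ℂ (Fin d)) :
    outer u = vecMulVec u.ofLp (star u.ofLp) := by
  ext i j; simp [outer, vecMulVec_apply]

lemma outer_psd {d : ℕ} (u : EuclideanSpace ℂ (Fin d)) : (outer u).PosSemidef := by
  rw [outer_eq]; exact posSemidef_vecMulVec_self_star _

lemma ks_det_scalar {d : ℕ} (u : EuclideanSpace ℂ (Fin d)) (τ s : ℂ) (hτ : τ ≠ 0) :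
    (τ • (1 : Matrix (Fin d) (Fin d) ℂ) + s • outer u).det =
      τ ^ d * (1 + s * ((‖u‖ ^ 2 / τ : ℂ))) := by
  have h1 : (τ • (1 : Matrix (Fin d) (Fin d) ℂ) + s • outer u) =
      τ • (1 + replicateCol Unit ((s / τ) • u.ofLp) * replicateRow Unit (star u.ofLp)) := by
    rw [← vecMulVec_eq Unit, outer_eq, smul_vecMulVec, smul_add, smul_smul, mul_div_cancel₀ _ hτ]
  rw [h1, det_smul, det_one_add_replicateCol_mul_replicateRow, Fintype.card_fin]
  have h2 : star u.ofLp ⬝ᵥ u.ofLp = ((‖u‖ : ℂ) ^ 2) := by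
    have h3 : ((‖u‖ ^ 2 : ℝ) : ℂ) = ((∑ i, ‖u i‖ ^ 2 : ℝ) : ℂ) := by
      rw [EuclideanSpace.norm_sq_eq]
    push_cast at h3
    rw [h3, dotProduct]
    refine Finset.sum_congr rfl fun i _ => ?_
    simp [Complex.conj_mul']
  rw [dotProduct_smul, h2, smul_eq_mul]
  ring

/-- The linear matrix pencil. -/
noncomputable def ksMat {d m r : ℕ} (u : Fin m → EuclideanSpace ℂ (Fin d))
    (z : Option (Fin m × Fin r) → ℂ) (j : Fin r) : Matrix (Fin d) (Fin d) ℂ :=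
  z none • 1 + ∑ i, z (some (i, j)) • outer (u i)

variable {d m r : ℕ} {u : Fin m → EuclideanSpace ℂ (Fin d)}

lemma ksMat_det_ne (z : Option (Fin m × Fin r) → ℂ) (h0 : 0 < (z none).im)
    (h1 : ∀ i, 0 ≤ (z i).im) (j : Fin r) : (ksMat u z j).det ≠ 0 := by
  intro hdet
  obtain ⟨v, hv, hMv⟩ := exists_mulVec_eq_zero_iff.2 hdet
  have h2 : star v ⬝ᵥ (ksMat u z j *ᵥ v) = 0 := by rw [hMv]; simp
  rw [ksMat, add_mulVec, sum_mulVec, dotProduct_add, dotProduct_sum] at h2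
  simp only [smul_mulVec, one_mulVec, dotProduct_smul, smul_eq_mul] at h2
  have h3 : 0 < star v ⬝ᵥ v := dotProduct_star_self_pos_iff.2 hv
  have h4 : ∀ i, 0 ≤ star v ⬝ᵥ (outer (u i) *ᵥ v) := fun i =>
    (outer_psd (u i)).dotProduct_mulVec_nonneg v
  have h5 := congrArg Complex.im h2
  rw [Complex.add_im, Complex.im_sum] at h5
  have h6 : ∀ i, 0 ≤ (z (some (i, j)) * (star v ⬝ᵥ (outer (u i) *ᵥ v))).im := by
    intro i
    obtain ⟨ha, hb⟩ := Complex.le_def.1 (h4 i)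
    rw [Complex.mul_im, ← hb]
    have := mul_nonneg (h1 (some (i, j))) ha
    simpa using this
  have h7 : 0 < (z none * (star v ⬝ᵥ v)).im := by
    obtain ⟨ha, hb⟩ := Complex.lt_def.1 h3
    rw [Complex.mul_im, ← hb]
    have := mul_pos h0 ha
    simpa using this
  have := Finset.sum_nonneg (fun i (_ : i ∈ Finset.univ) => h6 i)
  simp at h5
  simp at this h7
  linarith

lemma ksMat_posDef (w : Option (Fin m × Fin r) → ℝ) (h0 : 0 < w none)
    (h1 : ∀ i, 0 ≤ w i) (j : Fin r) : (ksMat u (fun i => (w i : ℂ)) j).PosDef := by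
  refine PosDef.add_posSemidef ?_ (posSemidef_sum _ fun i _ => ?_)
  · exact PosDef.one.smul (Complex.zero_lt_real.2 h0)
  · exact (outer_psd _).smul (Complex.zero_le_real.2 (h1 _))

lemma ksMat_conj (z : Option (Fin m × Fin r) → ℂ) (j : Fin r) :
    (ksMat u z j)ᴴ = ksMat u (fun i => starRingEnd ℂ (z i)) j := by
  simp only [ksMat, conjTranspose_add, conjTranspose_sum, conjTranspose_smul, conjTranspose_one]
  congr 1
  refine Finset.sum_congr rfl fun i _ => ?_
  rw [(outer_psd (u i)).1.eq]; rfl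

lemma ksMat_shift (hsum : ∑ i, outer (u i) = 1) (z : Option (Fin m × Fin r) → ℂ) (c : ℂ)
    (z' : Option (Fin m × Fin r) → ℂ) (h0 : z' none = z none + c)
    (h1 : ∀ i, z' (some i) = z (some i) - c) (j : Fin r) : ksMat u z' j = ksMat u z j := by
  simp only [ksMat, h0, h1, add_smul, sub_smul, Finset.sum_sub_distrib, ← Finset.smul_sum, hsum]
  abel

/-- The base polynomial over the complex numbers -/
noncomputable def ksFc (u : Fin m → EuclideanSpace ℂ (Fin d)) (r : ℕ) :
    MvPolynomial (Option (Fin m × Fin r)) ℂ :=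
  ∏ j : Fin r, (Matrix.of fun a b => C ((1 : Matrix (Fin d) (Fin d) ℂ) a b) * X none
    + ∑ i, C (outer (u i) a b) * X (some (i, j)) :
      Matrix (Fin d) (Fin d) (MvPolynomial (Option (Fin m × Fin r)) ℂ)).det

lemma ksFc_eval (z : Option (Fin m × Fin r) → ℂ) :
    eval z (ksFc u r) = ∏ j, (ksMat u z j).det := by
  rw [ksFc, map_prod]
  refine Finset.prod_congr rfl fun j _ => ?_
  rw [RingHom.map_det]
  congr 1
  ext a b
  simp [ksMat, Matrix.sum_apply, mul_comm]

lemma ksFc_hom : (ksFc u r).IsHomogeneous (r * d) := by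
  have h : ∀ j : Fin r, (Matrix.of fun a b => C ((1 : Matrix (Fin d) (Fin d) ℂ) a b) * X none
    + ∑ i, C (outer (u i) a b) * X (some (i, j)) :
      Matrix (Fin d) (Fin d) (MvPolynomial (Option (Fin m × Fin r)) ℂ)).det.IsHomogeneous d := by
    intro j
    rw [det_apply']
    refine IsHomogeneous.sum _ _ _ fun p _ => ?_
    have h1 : (∏ a : Fin d, (C ((1 : Matrix (Fin d) (Fin d) ℂ) (p a) a) * X none
      + ∑ i, C (outer (u i) (p a) a) * X (some (i, j)) :
        MvPolynomial (Option (Fin m × Fin r)) ℂ)).IsHomogeneous (∑ a : Fin d, 1) := by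
      refine IsHomogeneous.prod _ _ _ fun a _ => ?_
      refine IsHomogeneous.add ?_ (IsHomogeneous.sum _ _ _ fun i _ => ?_)
      · simpa using (isHomogeneous_C _ _).mul (isHomogeneous_X _ _)
      · simpa using (isHomogeneous_C _ _).mul (isHomogeneous_X _ _)
    have h2 : (((Equiv.Perm.sign p : ℤ) : ℂ)) = ((Equiv.Perm.sign p : ℤ) : ℂ) := rfl
    have h3 := (isHomogeneous_C (Option (Fin m × Fin r)) ((Equiv.Perm.sign p : ℤ) : ℂ)).mul h1
    simpa using h3
  have := IsHomogeneous.prod Finset.univ _ (fun _ : Fin r => d) (fun j _ => h j)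
  simpa [ksFc] using this

lemma ksF_exists (u : Fin m → EuclideanSpace ℂ (Fin d)) (r : ℕ) :
    ∃ F : MvPolynomial (Option (Fin m × Fin r)) ℝ, F.IsHomogeneous (r * d) ∧
      ∀ z : Option (Fin m × Fin r) → ℂ, aeval z F = ∏ j, (ksMat u z j).det := by
  have h1 : map (starRingEnd ℂ) (ksFc u r) = ksFc u r := by
    apply MvPolynomial.funext
    intro z
    have h2 : eval z (map (starRingEnd ℂ) (ksFc u r)) =
        starRingEnd ℂ (eval (fun i => starRingEnd ℂ (z i)) (ksFc u r)) := by
      induction ksFc u r using MvPolynomial.induction_on with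
      | C a => simp
      | add p q hp hq => simp [hp, hq]
      | mul_X p i hp => simp [hp]
    rw [h2, ksFc_eval, ksFc_eval, map_prod]
    refine Finset.prod_congr rfl fun j _ => ?_
    rw [← ksMat_conj, det_conjTranspose]
    simp
  have h3 : ksFc u r ∈ Set.range (map Complex.ofRealHom) := by
    rw [mem_range_map_iff_coeffs_subset]
    intro c hc
    obtain ⟨k, _, rfl⟩ := MvPolynomial.mem_coeffs_iff.1 hc
    have h4 := congrArg (coeff k) h1
    rw [coeff_map] at h4
    obtain ⟨x, hx⟩ := Complex.conj_eq_iff_real.1 h4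
    exact ⟨x, hx.symm⟩
  obtain ⟨F, hF⟩ := h3
  refine ⟨F, IsHomogeneous.of_map (f := Complex.ofRealHom) Complex.ofReal_injective ?_, ?_⟩
  · rw [hF]; exact ksFc_hom
  · intro z
    rw [← ksFc_eval, ← hF, eval_map]
    rfl

end Part5

section Part6a
open Matrix
open scoped ComplexOrder

section
open scoped Matrix.Norms.L2Operator MatrixOrder

lemma ks_norm_spec {d : ℕ} [Nonempty (Fin d)] (A : Matrix (Fin d) (Fin d) ℂ)
    (hA : A.PosSemidef) : (((opNorm A : ℝ) : ℂ) • (1 : Matrix (Fin d) (Fin d) ℂ) - A).det = 0 := by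
  have h0 : 0 ≤ A := Matrix.nonneg_iff_posSemidef.2 hA
  let _ : CStarAlgebra (Matrix (Fin d) (Fin d) ℂ) := {}
  have h1 : ‖A‖ ∈ spectrum ℝ A := CStarAlgebra.norm_mem_spectrum_of_nonneg h0
  rw [spectrum.mem_iff, Matrix.isUnit_iff_isUnit_det, isUnit_iff_ne_zero, not_not] at h1
  rw [← h1]
  congr 2
  ext i j
  simp [Matrix.algebraMap_matrix_apply, Matrix.one_apply, opNorm, Matrix.l2_opNorm_def]
  rfl

end

lemma ks_norm_le {d : ℕ} [Nonempty (Fin d)] (A : Matrix (Fin d) (Fin d) ℂ)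
    (hA : A.PosSemidef) (t B : ℝ) (ht : 0 < t)
    (h : ∀ x : ℝ, B ≤ x → ((x : ℂ) • (1 : Matrix (Fin d) (Fin d) ℂ) - ((1 / t : ℝ) : ℂ) • A).det ≠ 0) :
    opNorm A ≤ t * B := by
  by_contra hlt
  push Not at hlt
  refine h (opNorm A / t) ?_ ?_
  · rw [le_div_iff₀ ht]; linarith
  · have h1 : ((opNorm A / t : ℝ) : ℂ) • (1 : Matrix (Fin d) (Fin d) ℂ) - ((1 / t : ℝ) : ℂ) • A =
        ((1 / t : ℝ) : ℂ) • (((opNorm A : ℝ) : ℂ) • (1 : Matrix (Fin d) (Fin d) ℂ) - A) := by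
      rw [smul_sub, smul_smul]; congr 2; push_cast; ring
    rw [h1, det_smul, ks_norm_spec A hA, mul_zero]
end Part6a

section Part6
open MvPolynomial Matrix
open scoped ComplexOrder

variable {d m r : ℕ} {u : Fin m → EuclideanSpace ℂ (Fin d)}
  {F : MvPolynomial (Option (Fin m × Fin r)) ℝ}

lemma outer_sum_psd (u : Fin m → EuclideanSpace ℂ (Fin d)) (s : Finset (Fin m)) :
    (∑ i ∈ s, outer (u i)).PosSemidef :=
  posSemidef_sum _ fun _ _ => outer_psd _

lemma ks_real (hF : ∀ z : Option (Fin m × Fin r) → ℂ, aeval z F = ∏ j, (ksMat u z j).det)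
    (P : Option (Fin m × Fin r) → ℝ) :
    ((eval P F : ℝ) : ℂ) = ∏ j, (ksMat u (fun i => (P i : ℂ)) j).det := by
  rw [← hF]
  have := MvPolynomial.aeval_algebraMap_apply ℂ P F
  rw [MvPolynomial.aeval_eq_eval] at this
  exact this.symm

lemma ks_pos (hF : ∀ z : Option (Fin m × Fin r) → ℂ, aeval z F = ∏ j, (ksMat u z j).det)
    (w : Option (Fin m × Fin r) → ℝ) (h0 : 0 < w none) (h1 : ∀ i, 0 ≤ w i) :
    0 < eval w F := by
  have : (0 : ℂ) < ((eval w F : ℝ) : ℂ) := by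
    rw [ks_real hF]
    exact Finset.prod_pos fun j _ => (ksMat_posDef w h0 h1 j).det_pos
  exact Complex.zero_lt_real.1 this

lemma ks_KS (hF : ∀ z : Option (Fin m × Fin r) → ℂ, aeval z F = ∏ j, (ksMat u z j).det)
    (hh : F.IsHomogeneous (r * d)) : KS none (r * d) F where
  stab z h0 h1 := by
    rw [hF]
    exact Finset.prod_ne_zero_iff.2 fun j _ => ksMat_det_ne z h0 h1 j
  top := ⟨F, 0, by simp, hh, fun w h1 h0 => ks_pos hF w h0 h1, by simp⟩

lemma ks_sq_zero (hF : ∀ z : Option (Fin m × Fin r) → ℂ, aeval z F = ∏ j, (ksMat u z j).det)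
    (i : Fin m) (j : Fin r) (c : ℝ) :
    ksDir (Pi.single (some (i, j)) c) (ksDir (Pi.single (some (i, j)) c) F) = 0 := by
  set w : Option (Fin m × Fin r) → ℝ := Pi.single (some (i, j)) c with hw
  apply MvPolynomial.funext
  intro P
  set q := ksLine P w F with hq
  obtain ⟨a, ha⟩ := ks_det_rank_one (ksMat u (fun k => (P k : ℂ)) j) (u i).ofLp (star (u i).ofLp)
  rw [← outer_eq] at ha
  have h1 : ∀ s : ℝ, ((q.eval s : ℝ) : ℂ) = ((ksMat u (fun k => (P k : ℂ)) j).det + (s * c) * a) *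
      ∏ j' ∈ Finset.univ.erase j, (ksMat u (fun k => (P k : ℂ)) j').det := by
    intro s
    rw [hq, ksLine_eval_real, ks_real hF, ← Finset.mul_prod_erase _ _ (Finset.mem_univ j)]
    congr 1
    · rw [← ha]
      congr 1
      simp only [ksMat, hw, Pi.add_apply, Pi.smul_apply, Pi.single_apply, Option.some_inj,
        Prod.mk.injEq, and_true, reduceCtorEq, if_false, smul_zero, add_zero]
      push_cast
      simp only [add_smul, Finset.sum_add_distrib, add_assoc]
      congr 2
      rw [Finset.sum_eq_single i]
      · simp
      · intro b _ hb; simp [hb]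
      · simp
    · refine Finset.prod_congr rfl fun j' hj' => ?_
      have hne : j' ≠ j := Finset.ne_of_mem_erase hj'
      congr 1
      simp [ksMat, hw, hne]
  set K := ∏ j' ∈ Finset.univ.erase j, (ksMat u (fun k => (P k : ℂ)) j').det
  have h2 : q = Polynomial.C ((ksMat u (fun k => (P k : ℂ)) j).det * K).re +
      Polynomial.C (c * a * K).re * Polynomial.X := by
    apply Polynomial.funext
    intro s
    have h3 := congrArg Complex.re (h1 s)
    rw [Complex.ofReal_re] at h3
    rw [h3]
    have h4 : ((ksMat u (fun k => (P k : ℂ)) j).det + (s * c) * a) * K =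
      (ksMat u (fun k => (P k : ℂ)) j).det * K + (s : ℂ) * (c * a * K) := by ring
    rw [h4, Complex.add_re, Complex.re_ofReal_mul]
    simp only [Polynomial.eval_add, Polynomial.eval_mul, Polynomial.eval_C, Polynomial.eval_X]
    ring
  have h5 : Polynomial.derivative (Polynomial.derivative q) = 0 := by
    rw [h2]; simp
  rw [hq, ksLine_deriv_real, ksLine_deriv_real] at h5
  have h6 := ksLine_eval_real P w (ksDir w (ksDir w F)) 0
  rw [h5] at h6
  simpa using h6.symm

lemma ks_phi (hF : ∀ z : Option (Fin m × Fin r) → ℂ, aeval z F = ∏ j, (ksMat u z j).det)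
    (hsum : ∑ i, outer (u i) = 1) (τ δ : ℝ) (hτ : 0 < τ)
    (P v : Option (Fin m × Fin r) → ℝ) (hP0 : P none = τ + δ) (hP : ∀ k, P (some k) = -δ)
    (i : Fin m) (hv0 : v none = 0) (hv : ∀ i' j, v (some (i', j)) = if i' = i then 1 else 0) :
    ksPhi F v P = r * (‖u i‖ ^ 2 / τ) := by
  set k : ℝ := ‖u i‖ ^ 2 / τ with hk
  set q := ksLine P v F with hq
  have h1 : ∀ s : ℝ, q.eval s = (τ ^ d * (1 + s * k)) ^ r := by
    intro s
    have h2 : ((q.eval s : ℝ) : ℂ) = (((τ ^ d * (1 + s * k)) ^ r : ℝ) : ℂ) := by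
      rw [hq, ksLine_eval_real, ks_real hF]
      have h3 : ∀ j : Fin r, (ksMat u (fun a => (((P + s • v) a : ℝ) : ℂ)) j).det =
          (τ : ℂ) ^ d * (1 + s * k) := by
        intro j
        have h4 := ks_det_scalar (u i) τ s (by exact_mod_cast hτ.ne')
        have h5 : (τ : ℂ) • (1 : Matrix (Fin d) (Fin d) ℂ) + (s : ℂ) • outer (u i) =
            ksMat u (fun a => (((P + s • v) a : ℝ) : ℂ)) j := by
          rw [ksMat_shift hsum (fun a => match a with
            | none => (τ : ℂ)
            | some (i', _) => if i' = i then (s : ℂ) else 0) δ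
              (fun a => (((P + s • v) a : ℝ) : ℂ))]
          · simp [ksMat]
          · simp [hP0, hv0]
          · rintro ⟨i', j'⟩
            by_cases h : i' = i <;> simp [hP, hv, h]
            ring
        rw [← h5, h4, hk]
        push_cast
        rfl
      rw [Finset.prod_congr rfl fun j _ => h3 j]
      simp
    exact_mod_cast h2
  have h6 : q = (Polynomial.C (τ ^ d) * (1 + Polynomial.X * Polynomial.C k)) ^ r := by
    apply Polynomial.funext
    intro s
    simp only [h1, Polynomial.eval_pow, Polynomial.eval_mul, Polynomial.eval_C,
      Polynomial.eval_add, Polynomial.eval_one, Polynomial.eval_X]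
  have h7 : eval P F = (τ ^ d) ^ r := by
    have := ksLine_eval_real P v F 0
    rw [← hq, h1] at this
    simpa using this.symm
  have h8 : eval P (ksDir v F) = r * (τ ^ d) ^ r * k := by
    have := ksLine_eval_real P v (ksDir v F) 0
    rw [← ksLine_deriv_real, ← hq, h6] at this
    simp only [zero_smul, add_zero] at this
    rw [← this, Polynomial.derivative_pow]
    generalize τ ^ d = T
    rcases r with _ | r
    · simp
    · simp
      ring
  rw [ksPhi, h7, h8]
  have : (τ ^ d) ^ r ≠ 0 := by positivity
  field_simp

end Part6

/-- If `∑ uᵢuᵢ* = I`, `‖uᵢ‖² ≤ ε` for all `i`, and `t₁, …, t_r > 0` sum to `1`, then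
`{1, …, m}` can be partitioned into `r` sets `S₁, …, S_r` with
`‖∑_{i ∈ S_j} uᵢuᵢ*‖ ≤ t_j (1 + √(rε))²` for each `j`. -/
theorem stmt1 {d m : ℕ} (ε : ℝ) (u : Fin m → EuclideanSpace ℂ (Fin d))
    (hsum : ∑ i, outer (u i) = 1)
    (hnorm : ∀ i, ‖u i‖ ^ 2 ≤ ε)
    (r : ℕ) (t : Fin r → ℝ) (ht : ∀ j, 0 < t j) (htsum : ∑ j, t j = 1) :
    ∃ S : Fin r → Finset (Fin m),
      (∀ i : Fin m, ∃! j : Fin r, i ∈ S j) ∧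
      ∀ j, opNorm (∑ i ∈ S j, outer (u i)) ≤ t j * (1 + Real.sqrt (r * ε)) ^ 2 := by
  classical
  have hr : 0 < r := by
    rcases Nat.eq_zero_or_pos r with h | h
    · subst h; simp at htsum
    · exact h
  have : Nonempty (Fin r) := ⟨⟨0, hr⟩⟩
  -- it suffices to choose a colouring
  suffices hc : ∃ c : Fin m → Fin r, ∀ j,
      opNorm (∑ i ∈ Finset.univ.filter (fun i => c i = j), outer (u i)) ≤
        t j * (1 + Real.sqrt (r * ε)) ^ 2 by
    obtain ⟨c, hc⟩ := hc
    refine ⟨fun j => Finset.univ.filter (fun i => c i = j), fun i => ⟨c i, by simp, ?_⟩, hc⟩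
    intro j hj
    have hj' : c i = j := by simpa using hj
    exact hj'.symm
  rcases Nat.eq_zero_or_pos d with hd | hd
  · subst hd
    refine ⟨fun _ => ⟨0, hr⟩, fun j => ?_⟩
    have h0 : ∀ A : Matrix (Fin 0) (Fin 0) ℂ, opNorm A = 0 := by
      intro A
      rw [Subsingleton.elim A 0, opNorm, map_zero, norm_zero]
    rw [h0]
    exact mul_nonneg (ht j).le (sq_nonneg _)
  have : Nonempty (Fin d) := ⟨⟨0, hd⟩⟩
  have hε : 0 < ε := by
    by_contra hle
    push Not at hle
    have hu : ∀ i, u i = 0 := by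
      intro i
      have h1 : ‖u i‖ ^ 2 = 0 := le_antisymm ((hnorm i).trans hle) (sq_nonneg _)
      simpa using h1
    have h2 : ∑ i, outer (u i) = 0 := by
      refine Finset.sum_eq_zero fun i _ => ?_
      rw [hu i]; ext a b; simp [outer]
    rw [h2] at hsum
    exact zero_ne_one hsum
  have hr' : (0 : ℝ) < r := by exact_mod_cast hr
  set q := Real.sqrt (r * ε) with hq
  have hq0 : 0 < q := Real.sqrt_pos.2 (mul_pos hr' hε)
  have hq2 : q ^ 2 = r * ε := Real.sq_sqrt (mul_pos hr' hε).le
  obtain ⟨F, hh, hF⟩ := ksF_exists u r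
  have hKS := ks_KS hF hh
  set δ : ℝ := 1 + q with hδ
  set τ : ℝ := q + q ^ 2 with hτ
  have hτ0 : 0 < τ := by positivity
  have hδ0 : 0 < δ := by positivity
  have hB : τ + δ = (1 + q) ^ 2 := by rw [hδ, hτ]; ring
  set P : Option (Fin m × Fin r) → ℝ := fun a => Option.elim a (τ + δ) (fun _ => -δ) with hP
  set w : Fin m → Fin r → Option (Fin m × Fin r) → ℝ :=
    fun i j => Pi.single (some (i, j)) (1 / t j) with hw
  have hw0 : ∀ i j k, 0 ≤ w i j k := by
    intro i j k
    have := (ht j).le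
    simp only [hw, Pi.single_apply]
    split_ifs <;> positivity
  have hv0 : ∀ i, (∑ j, t j • w i j) none = 0 := by
    intro i; simp [hw, Finset.sum_apply]
  have hv : ∀ i i' j, (∑ j, t j • w i j) (some (i', j)) = if i' = i then 1 else 0 := by
    intro i i' j
    simp only [hw, Finset.sum_apply, Pi.smul_apply, Pi.single_apply, Option.some_inj,
      Prod.mk.injEq, smul_eq_mul]
    by_cases h : i' = i
    · rw [Finset.sum_eq_single j]
      · simp [h, (ht j).ne']
      · intro b _ hb; simp [hb.symm]
      · simp
    · simp [h]
  have hvnn : ∀ i k, 0 ≤ (∑ j, t j • w i j) k := by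
    intro i k
    rw [Finset.sum_apply]
    exact Finset.sum_nonneg (fun j _ => mul_nonneg (ht j).le (hw0 i j k))
  -- initial position
  have hAb : KSAbove F P := by
    intro x hx
    have h1 : 0 < MvPolynomial.eval (fun a => Option.elim a (τ + x none)
        (fun k => x (some k)) : Option (Fin m × Fin r) → ℝ) F := by
      apply ks_pos hF
      · have := hx none
        simp only [Option.elim_none]
        linarith
      · intro k
        rcases k with _ | k
        · have := hx none
          simp only [Option.elim_none]
          linarith
        · exact hx _
    have h2 : ((MvPolynomial.eval (P + x) F : ℝ) : ℂ) = ((MvPolynomial.eval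
        (fun a => Option.elim a (τ + x none)
        (fun k => x (some k)) : Option (Fin m × Fin r) → ℝ) F : ℝ) : ℂ) := by
      rw [ks_real hF, ks_real hF]
      refine Finset.prod_congr rfl fun j _ => ?_
      congr 1
      apply ksMat_shift hsum _ (δ : ℂ)
      · simp [hP]; ring
      · intro k; simp [hP]; ring
    rw [Complex.ofReal_inj.1 h2]
    exact h1
  have hphi : ∀ i, ksPhi F (∑ j, t j • w i j) P ≤ 1 - 1 / δ := by
    intro i
    rw [ks_phi hF hsum τ δ hτ0 P _ (by simp [hP]) (by simp [hP]) i (hv0 i) (hv i)]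
    have h1 : 1 - 1 / δ = r * (ε / τ) := by
      rw [mul_div_assoc', ← hq2, hδ, hτ]
      field_simp
      ring
    rw [h1]
    have := hnorm i
    gcongr
  have hl : ∀ v ∈ (List.finRange m).map (fun i => ∑ j, t j • w i j), ∃ i, ∑ j, t j • w i j = v := by
    intro v hv
    obtain ⟨i, _, hi⟩ := List.mem_map.1 hv
    exact ⟨i, hi⟩
  have hfin := hKS.ops_above ((List.finRange m).map (fun i => ∑ j, t j • w i j)) hδ0 hAb
    (fun v hv => by obtain ⟨i, rfl⟩ := hl v hv; exact hvnn i)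
    (fun v hv => by obtain ⟨i, rfl⟩ := hl v hv; exact hphi i)
  have hsumfin : ∀ f : Fin m → Option (Fin m × Fin r) → ℝ,
      ((List.finRange m).map f).sum = ∑ i, f i := by
    intro f
    rw [← List.ofFn_eq_map, List.sum_ofFn]
  have hP1 : P + δ • ((List.finRange m).map (fun i => ∑ j, t j • w i j)).sum =
      Pi.single none (τ + δ) := by
    rw [hsumfin]
    ext k
    rcases k with _ | ⟨i', j'⟩
    · rw [Pi.add_apply, Pi.smul_apply, Finset.sum_apply, Finset.sum_eq_zero fun i _ => hv0 i]
      simp [hP]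
    · rw [Pi.add_apply, Pi.smul_apply, Finset.sum_apply,
        Finset.sum_congr rfl fun i _ => hv i i' j']
      simp [hP]
  rw [hP1] at hfin
  obtain ⟨c, hc⟩ := hKS.ops_select t ht htsum w hw0 (Pi.single none (τ + δ)) (List.finRange m)
    (List.nodup_finRange m) (fun s hs => by
      apply hfin
      intro k
      simp only [Pi.smul_apply, Pi.single_apply, smul_eq_mul]
      split_ifs <;> simp [hs])
  refine ⟨c, fun j => ?_⟩
  rw [← hB]
  apply ks_norm_le _ (outer_sum_psd u _) _ _ (ht j)
  intro x hx
  have h1 := hc (x - (τ + δ)) (by linarith)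
  rw [ksOps_eval] at h1
  swap
  · intro v hv
    obtain ⟨i, _, rfl⟩ := List.mem_map.1 hv
    exact ks_sq_zero hF i (c i) _
  have h2 : ((MvPolynomial.eval _ F : ℝ) : ℂ) ≠ 0 := Complex.ofReal_ne_zero.2 h1.ne'
  rw [ks_real hF, Finset.prod_ne_zero_iff] at h2
  have h3 := h2 j (Finset.mem_univ j)
  convert h3 using 2
  rw [hsumfin, ksMat, sub_eq_add_neg]
  congr 1
  · simp [hw, Finset.sum_apply]
  · rw [Finset.smul_sum, ← Finset.sum_neg_distrib, Finset.sum_filter]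
    refine Finset.sum_congr rfl fun i _ => ?_
    have h4 : (∑ i', w i' (c i')) (some (i, j)) = if c i = j then 1 / t j else 0 := by
      rw [Finset.sum_apply, Finset.sum_eq_single i]
      · simp only [hw, Pi.single_apply, Option.some_inj, Prod.mk.injEq, true_and]
        by_cases h : c i = j
        · subst h; simp
        · simp [h, Ne.symm h]
      · intro b _ hb; simp [hw, hb.symm]
      · simp
    rw [Pi.sub_apply, h4]
    split_ifs <;> simp
end

section
/- There is a universal constant C > 0 such that the following holds. Let u_1, ..., u_m be column vectors in ℂ^d such that Σ_{i=1}^m u_i u_i* = I and ‖u_i‖² ≤ ε for all i, and let t ∈ [0,1]. Then there exists a set of indices S ⊆ {1, ..., m} such that ‖Σ_{i ∈ S} u_i u_i* − t I‖ ≤ C √ε. -/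
set_option linter.unusedSectionVars false
namespace KS
open Finset

variable {κ : Type*} [DecidableEq κ]

/-- Finite difference in direction `i`; the partial derivative for multi-affine functions. -/
def dd {R : Type*} [CommRing R] (i : κ) (F : (κ → R) → R) : (κ → R) → R :=
  fun z => F (z + Pi.single i 1) - F z

/-- Multi-affine functions. -/
def MA {R : Type*} [CommRing R] (F : (κ → R) → R) : Prop :=
  ∀ z i s, F (z + Pi.single i s) = F z + s * dd i F z

theorem MA.dd {R : Type*} [CommRing R] {F : (κ → R) → R} (h : MA F) (i : κ) : MA (dd i F) := by
  intro z j s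
  have h1 := h (z + Pi.single i 1) j s
  have h2 := h z j s
  simp only [KS.dd] at *
  rw [add_right_comm z (Pi.single j s), h1, h2, add_right_comm z (Pi.single j 1)]
  ring

/-- The operator `1 - α ∂_i - β ∂_j`. -/
def TT {R : Type*} [CommRing R] (α β : R) (i j : κ) (F : (κ → R) → R) : (κ → R) → R :=
  fun z => F z - α * dd i F z - β * dd j F z

theorem MA.TT {R : Type*} [CommRing R] {F : (κ → R) → R} (h : MA F) (α β : R) (i j : κ) :
    MA (TT α β i j F) := by
  intro z k s
  have h0 := h z k s
  have h1 := h.dd i z k s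
  have h2 := h.dd j z k s
  have e1 : KS.dd k (KS.TT α β i j F) z =
     KS.dd k F z - α * KS.dd k (KS.dd i F) z - β * KS.dd k (KS.dd j F) z := by
    simp only [KS.dd, KS.TT]; ring
  rw [e1]
  simp only [KS.TT, h0, h1, h2]
  ring

/-- Real stable multi-affine. -/
structure Good (F : (κ → ℂ) → ℂ) : Prop where
  ma : MA F
  cont : Continuous F
  conj : ∀ z, F (fun i => (starRingEnd ℂ) (z i)) = (starRingEnd ℂ) (F z)
  stab : ∀ z, (∀ i, 0 < (z i).im) → F z ≠ 0

theorem conj_dd {F : (κ → ℂ) → ℂ} 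
    (hc : ∀ z, F (fun i => (starRingEnd ℂ) (z i)) = (starRingEnd ℂ) (F z)) (i : κ) :
    ∀ z, dd i F (fun i => (starRingEnd ℂ) (z i)) = (starRingEnd ℂ) (dd i F z) := by
  intro z
  have : (fun i => (starRingEnd ℂ) (z i)) + Pi.single i (1:ℂ) =
      fun k => (starRingEnd ℂ) ((z + Pi.single i (1:ℂ) : κ → ℂ) k) := by
    ext k
    by_cases h : k = i
    · subst h; simp
    · simp [h]
  simp only [dd, this, hc, map_sub]

theorem cont_dd {F : (κ → ℂ) → ℂ} (hc : Continuous F) (i : κ) : Continuous (dd i F) := by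
  unfold dd
  fun_prop

theorem Good.im_lt {F : (κ → ℂ) → ℂ} (h : Good F) (i : κ) (z : κ → ℂ) (hz : ∀ i, 0 < (z i).im)
    (hi : dd i F z ≠ 0) : (dd i F z / F z).im < 0 := by
  have hF := h.stab z hz
  have h1 := h.ma z i (-(F z / dd i F z))
  have h2 : F (z + Pi.single i (-(F z / dd i F z))) = 0 := by
    rw [h1]; field_simp; ring
  have h3 : (z i - F z / dd i F z).im ≤ 0 := by
    by_contra hcon
    push Not at hcon
    refine h.stab _ (fun k => ?_) h2
    by_cases hk : k = i
    · subst hk; simpa [sub_eq_add_neg] using hcon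
    · simpa [hk] using hz k
  have h4 : 0 < (F z / dd i F z).im := by
    have := hz i
    simp only [Complex.sub_im] at h3
    linarith
  have h5 : dd i F z / F z = (F z / dd i F z)⁻¹ := by rw [inv_div]
  rw [h5, Complex.inv_im]
  have : 0 < Complex.normSq (F z / dd i F z) := Complex.normSq_pos.mpr (div_ne_zero hF hi)
  exact div_neg_of_neg_of_pos (by linarith) this

theorem Good.im_le {F : (κ → ℂ) → ℂ} (h : Good F) (i : κ) (z : κ → ℂ) (hz : ∀ i, 0 < (z i).im) :
    (dd i F z / F z).im ≤ 0 := by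
  by_cases hi : dd i F z = 0
  · simp [hi]
  · exact (h.im_lt i z hz hi).le

theorem Good.TT {F : (κ → ℂ) → ℂ} (h : Good F) (α β : ℝ) (hα : 0 ≤ α) (hβ : 0 ≤ β) (i j : κ) :
    Good (TT (α : ℂ) (β : ℂ) i j F) where
  ma := h.ma.TT _ _ _ _
  cont := by
    have := cont_dd h.cont i
    have := cont_dd h.cont j
    have := h.cont
    unfold KS.TT
    fun_prop
  conj := by
    intro z
    simp only [KS.TT, h.conj, conj_dd h.conj, map_sub, map_mul, Complex.conj_ofReal]
  stab := by
    intro z hz h0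
    have hF := h.stab z hz
    have e : 1 = α * (dd i F z / F z) + β * (dd j F z / F z) := by
      simp only [KS.TT] at h0
      field_simp
      linear_combination h0
    have e2 := congrArg Complex.im e
    simp only [Complex.one_im, Complex.add_im, Complex.im_ofReal_mul] at e2
    have h1 := h.im_le i z hz
    have h2 := h.im_le j z hz
    have m1 : α * (dd i F z / F z).im ≤ 0 := mul_nonpos_of_nonneg_of_nonpos hα h1
    have m2 : β * (dd j F z / F z).im ≤ 0 := mul_nonpos_of_nonneg_of_nonpos hβ h2
    have z1 : (α : ℂ) * (dd i F z / F z) = 0 := by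
      by_cases hi : dd i F z = 0
      · simp [hi]
      · have := h.im_lt i z hz hi
        have : α = 0 := by
          by_contra hne
          have hp : 0 < α := lt_of_le_of_ne hα (Ne.symm hne)
          have := mul_neg_of_pos_of_neg hp this
          linarith
        simp [this]
    have z2 : (β : ℂ) * (dd j F z / F z) = 0 := by
      by_cases hi : dd j F z = 0
      · simp [hi]
      · have := h.im_lt j z hz hi
        have : β = 0 := by
          by_contra hne
          have hp : 0 < β := lt_of_le_of_ne hβ (Ne.symm hne)
          have := mul_neg_of_pos_of_neg hp this
          linarith
        simp [this]
    rw [z1, z2] at e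
    simp at e

theorem Good.im_mul_le {F : (κ → ℂ) → ℂ} (h : Good F) (i : κ) (z : κ → ℂ) (hz : ∀ i, 0 ≤ (z i).im) :
    (dd i F z * (starRingEnd ℂ) (F z)).im ≤ 0 := by
  have key : ∀ z : κ → ℂ, (∀ i, 0 < (z i).im) → (dd i F z * (starRingEnd ℂ) (F z)).im ≤ 0 := by
    intro z hz
    have h1 := h.im_le i z hz
    have hF := h.stab z hz
    have : dd i F z * (starRingEnd ℂ) (F z) = (Complex.normSq (F z) : ℂ) * (dd i F z / F z) := by
      rw [Complex.normSq_eq_conj_mul_self]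
      field_simp
    rw [this, Complex.im_ofReal_mul]
    exact mul_nonpos_of_nonneg_of_nonpos (Complex.normSq_nonneg _) h1
  have hcont : Continuous fun η : ℝ =>
      (dd i F (fun k => z k + η * Complex.I) * (starRingEnd ℂ) (F (fun k => z k + η * Complex.I))).im := by
    have h1 := cont_dd h.cont i
    have h2 := h.cont
    have h3 : Continuous fun η : ℝ => (fun k => z k + (η : ℂ) * Complex.I) := by fun_prop
    exact Complex.continuous_im.comp
      ((h1.comp h3).mul (Complex.continuous_conj.comp (h2.comp h3)))
  have ht := (hcont.tendsto 0).mono_left (nhdsWithin_le_nhds (s := Set.Ioi 0))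
  have hle := le_of_tendsto (b := 0) ht (by
    filter_upwards [self_mem_nhdsWithin] with η hη
    apply key
    intro k
    have := hz k
    have : 0 < η := hη
    simp
    linarith)
  simpa using hle

/-- The real restriction. -/
noncomputable def rr (F : (κ → ℂ) → ℂ) : (κ → ℝ) → ℝ := fun a => (F (fun i => (a i : ℂ))).re

theorem single_cast (a : κ → ℝ) (i : κ) (s : ℝ) :
    (fun k => (((a + Pi.single i s : κ → ℝ) k : ℝ) : ℂ)) = (fun k => (a k : ℂ)) + Pi.single i (s : ℂ) := by
  ext k
  by_cases h : k = i
  · subst h; simp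
  · simp [h]

theorem rr_cast {F : (κ → ℂ) → ℂ}
    (hc : ∀ z, F (fun i => (starRingEnd ℂ) (z i)) = (starRingEnd ℂ) (F z)) (a : κ → ℝ) :
    F (fun i => (a i : ℂ)) = (rr F a : ℂ) := by
  have := hc (fun i => (a i : ℂ))
  simp only [Complex.conj_ofReal] at this
  exact (Complex.conj_eq_iff_re.mp this.symm).symm

theorem rr_dd (F : (κ → ℂ) → ℂ) (i : κ) : rr (dd i F) = dd i (rr F) := by
  ext a
  simp only [rr, dd, single_cast, Complex.sub_re, Complex.ofReal_one]

theorem rr_TT (F : (κ → ℂ) → ℂ) (α β : ℝ) (i j : κ) :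
    rr (TT (α : ℂ) (β : ℂ) i j F) = TT α β i j (rr F) := by
  ext a
  simp only [TT, ← rr_dd]
  simp only [rr, TT, Complex.sub_re, Complex.re_ofReal_mul]

/-- Real strongly Rayleigh functions. -/
structure RG (f : (κ → ℝ) → ℝ) : Prop where
  ma : MA f
  ray : ∀ a i j, f a * dd j (dd i f) a ≤ dd i f a * dd j f a

theorem Good.RG {F : (κ → ℂ) → ℂ} (h : Good F) : RG (rr F) where
  ma := by
    intro a i s
    have := congrArg Complex.re (h.ma (fun k => (a k : ℂ)) i s)
    rw [← single_cast, Complex.add_re, Complex.re_ofReal_mul] at this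
    rw [← rr_dd]
    exact this
  ray := by
    intro a i j
    have hz : ∀ k, 0 ≤ (((fun k => (a k : ℂ)) + Pi.single j Complex.I : κ → ℂ) k).im := by
      intro k
      by_cases h : k = j
      · subst h; simp
      · simp [h]
    have h1 := h.im_mul_le i _ hz
    rw [h.ma, h.ma.dd i] at h1
    rw [rr_cast h.conj, rr_cast (conj_dd h.conj i), rr_cast (conj_dd h.conj j),
      rr_cast (conj_dd (conj_dd h.conj i) j)] at h1
    simp only [rr_dd] at h1
    simp at h1
    linarith

theorem quad_conv {n0 n1 n2 p0 p1 p2 δ : ℝ} (hδ : 0 ≤ δ) (hp0 : 0 < p0) (hp1 : 0 ≤ p1) (hp2 : 0 ≤ p2)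
    (hW : ∀ s : ℝ, (n1 + 2 * n2 * s) * (p0 + p1 * s + p2 * s ^ 2) -
      (n0 + n1 * s + n2 * s ^ 2) * (p1 + 2 * p2 * s) ≤ 0) :
    0 ≤ (n0 * (p0 + p1 * δ + p2 * δ ^ 2) - (n0 + n1 * δ + n2 * δ ^ 2) * p0) *
        (p0 + p1 * δ + p2 * δ ^ 2) +
      δ * ((n1 + 2 * n2 * δ) * (p0 + p1 * δ + p2 * δ ^ 2) -
      (n0 + n1 * δ + n2 * δ ^ 2) * (p1 + 2 * p2 * δ)) * p0 := by
  obtain ⟨a, ha⟩ : ∃ a, a = -(n1 * p0 - n0 * p1) := ⟨_, rfl⟩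
  obtain ⟨b, hb⟩ : ∃ b, b = -(n2 * p0 - n0 * p2) := ⟨_, rfl⟩
  obtain ⟨c, hc⟩ : ∃ c, c = -(n2 * p1 - n1 * p2) := ⟨_, rfl⟩
  have hq : ∀ s : ℝ, 0 ≤ c * (s * s) + (2 * b) * s + a := by
    intro s; have := hW s; subst ha hb hc; nlinarith
  have hd := discrim_le_zero hq
  simp only [discrim] at hd
  have ha0 : 0 ≤ a := by have := hq 0; simpa using this
  have rel : b * p1 = a * p2 + c * p0 := by subst ha hb hc; ring
  have hc0 : 0 ≤ c := by
    by_contra hcon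
    push Not at hcon
    have h1 : c * a ≤ 0 := by nlinarith
    have : a * c = 0 ∧ b = 0 := by
      have : b ^ 2 ≤ 0 := by nlinarith
      have hb0 : b = 0 := by nlinarith
      exact ⟨by nlinarith, hb0⟩
    have ha1 : a = 0 := by
      rcases mul_eq_zero.mp this.1 with h | h
      · exact h
      · linarith
    have := hq 1
    rw [‹a * c = 0 ∧ b = 0›.2, ha1] at this
    linarith
  have hb0 : 0 ≤ b := by
    by_contra hcon
    push Not at hcon
    have h1 : b * p1 ≤ 0 := mul_nonpos_of_nonpos_of_nonneg hcon.le hp1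
    have h2 : 0 ≤ a * p2 := mul_nonneg ha0 hp2
    have h3 : 0 ≤ c * p0 := mul_nonneg hc0 hp0.le
    have h4 : c * p0 = 0 := by linarith
    have h5 : c = 0 := by
      rcases mul_eq_zero.mp h4 with h | h
      · exact h
      · linarith
    rw [h5] at hd
    nlinarith
  have hab : 0 ≤ a * p1 - b * p0 := by
    rcases hb0.eq_or_lt with h | h
    · rw [← h]; simp; positivity
    · have : 0 ≤ b * (a * p1 - b * p0) := by
        have : b * (a * p1 - b * p0) = a ^ 2 * p2 + (a * c - b ^ 2) * p0 := by
          linear_combination a * rel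
        rw [this]
        have : 0 ≤ a * c - b ^ 2 := by linarith
        positivity
      exact nonneg_of_mul_nonneg_right this h
  have key : (n0 * (p0 + p1 * δ + p2 * δ ^ 2) - (n0 + n1 * δ + n2 * δ ^ 2) * p0) *
        (p0 + p1 * δ + p2 * δ ^ 2) +
      δ * ((n1 + 2 * n2 * δ) * (p0 + p1 * δ + p2 * δ ^ 2) -
      (n0 + n1 * δ + n2 * δ ^ 2) * (p1 + 2 * p2 * δ)) * p0
      = δ ^ 2 * ((a * p1 - b * p0) + 2 * a * p2 * δ + b * p2 * δ ^ 2) := by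
    subst ha hb; ring
  rw [key]
  positivity

/-- Being above the roots. -/
def Above (f : (κ → ℝ) → ℝ) (a : κ → ℝ) : Prop := ∀ y : κ → ℝ, 0 ≤ y → 0 < f (a + y)

theorem Above.add {f : (κ → ℝ) → ℝ} {a : κ → ℝ} (h : Above f a) {y : κ → ℝ} (hy : 0 ≤ y) :
    Above f (a + y) := by
  intro y' hy'
  rw [add_assoc]
  exact h _ (add_nonneg hy hy')

theorem Above.pos {f : (κ → ℝ) → ℝ} {a : κ → ℝ} (h : Above f a) : 0 < f a := by
  simpa using h 0 le_rfl

theorem nonneg_of_lin {p q : ℝ} (h : ∀ s : ℝ, 0 ≤ s → 0 < p + s * q) : 0 ≤ q := by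
  by_contra hq
  push Not at hq
  have hp : 0 < p := by simpa using h 0 le_rfl
  have := h (p / -q) (div_nonneg hp.le (by linarith))
  have e : p + p / -q * q = 0 := by
    have : q ≠ 0 := hq.ne
    field_simp; ring
  linarith

theorem single_nn (i : κ) {s : ℝ} (hs : 0 ≤ s) : (0 : κ → ℝ) ≤ Pi.single i s :=
  Pi.single_nonneg.mpr hs

theorem Above.dd_nonneg {f : (κ → ℝ) → ℝ} {a : κ → ℝ} (h : Above f a) (hf : MA f) (i : κ) :
    0 ≤ dd i f a := by
  apply nonneg_of_lin (p := f a)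
  intro s hs
  rw [← hf]
  exact h _ (single_nn i hs)

theorem Above.dd2_nonneg {f : (κ → ℝ) → ℝ} {a : κ → ℝ} (h : Above f a) (hf : MA f) (i j : κ) :
    0 ≤ dd j (dd i f) a := by
  have : ∀ s : ℝ, 0 ≤ s → 0 ≤ dd i f a + s * dd j (dd i f) a := by
    intro s hs
    rw [← hf.dd i]
    exact (h.add (single_nn j hs)).dd_nonneg hf i
  apply nonneg_of_lin (p := dd i f a + 1)
  intro s hs
  linarith [this s hs]

theorem mono_single {f : (κ → ℝ) → ℝ} (hf : RG f) {b : κ → ℝ} (hb : Above f b) (z w : κ) (c : ℝ)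
    (h : dd z f b + dd w f b ≤ c * f b) (k : κ) {s : ℝ} (hs : 0 ≤ s) :
    dd z f (b + Pi.single k s) + dd w f (b + Pi.single k s) ≤ c * f (b + Pi.single k s) := by
  have p1 := hb.pos
  have p2 := (hb.add (single_nn k hs)).pos
  have r1 := hf.ray b z k
  have r2 := hf.ray b w k
  have e0 := hf.ma b k s
  have e1 := hf.ma.dd z b k s
  have e2 := hf.ma.dd w b k s
  have : (dd z f (b + Pi.single k s) + dd w f (b + Pi.single k s)) * f b ≤
      (c * f (b + Pi.single k s)) * f b := by
    have g : (dd z f (b + Pi.single k s) + dd w f (b + Pi.single k s)) * f b ≤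
      (dd z f b + dd w f b) * f (b + Pi.single k s) := by
      rw [e0, e1, e2]
      nlinarith
    have := mul_le_mul_of_nonneg_right h p2.le
    nlinarith
  exact le_of_mul_le_mul_right this p1

theorem mono_all [Fintype κ] {f : (κ → ℝ) → ℝ} (hf : RG f) {b : κ → ℝ} (hb : Above f b) (z w : κ) (c : ℝ)
    (h : dd z f b + dd w f b ≤ c * f b) {y : κ → ℝ} (hy : 0 ≤ y) :
    dd z f (b + y) + dd w f (b + y) ≤ c * f (b + y) := by
  have key : ∀ s : Finset κ, dd z f (b + ∑ k ∈ s, Pi.single k (y k)) +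
      dd w f (b + ∑ k ∈ s, Pi.single k (y k)) ≤ c * f (b + ∑ k ∈ s, Pi.single k (y k)) := by
    intro s
    induction s using Finset.induction_on with
    | empty => simpa using h
    | insert k s hk ih =>
      rw [Finset.sum_insert hk, add_comm (Pi.single k (y k) : κ → ℝ), ← add_assoc]
      exact mono_single hf (hb.add (Finset.sum_nonneg fun k _ => single_nn k (hy k))) z w c ih k (hy k)
  have := key Finset.univ
  rwa [Finset.univ_sum_single] at this

/-- One step of the barrier argument. -/
theorem barrier_step [Fintype κ] {f : (κ → ℝ) → ℝ} (hf : RG f) {a : κ → ℝ} (ha : Above f a) (z w : κ)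
    {δ : ℝ} (hδ : 0 < δ) (h : dd z f a + dd w f a ≤ (1 - 1 / δ) * f a) :
    Above (TT 1 1 z w f) (a + Pi.single z δ + Pi.single w δ) ∧
    ∀ j, dd j (TT 1 1 z w f) (a + Pi.single z δ + Pi.single w δ) * f a ≤
      dd j f a * TT 1 1 z w f (a + Pi.single z δ + Pi.single w δ) := by
  have hy : (0 : κ → ℝ) ≤ Pi.single z δ + Pi.single w δ :=
    add_nonneg (single_nn z hδ.le) (single_nn w hδ.le)
  have hT : ∀ y : κ → ℝ, 0 ≤ y → 1 / δ * f (a + y) ≤ TT 1 1 z w f (a + y) := by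
    intro y hy
    have := mono_all hf ha z w _ h hy
    simp only [TT]
    linarith
  refine ⟨?_, ?_⟩
  · intro y hy'
    rw [add_assoc, add_assoc]
    have h1 := hT (Pi.single z δ + (Pi.single w δ + y)) (by
      rw [← add_assoc]; exact add_nonneg hy hy')
    have h2 := ha (Pi.single z δ + (Pi.single w δ + y)) (by
      rw [← add_assoc]; exact add_nonneg hy hy')
    have : 0 < 1 / δ * f (a + (Pi.single z δ + (Pi.single w δ + y))) := by positivity
    linarith
  · intro j
    have line : ∀ g : (κ → ℝ) → ℝ, MA g → ∀ s : ℝ, g (a + Pi.single z s + Pi.single w s) =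
        g a + (dd z g a + dd w g a) * s + dd z (dd w g) a * s ^ 2 := by
      intro g hg s
      rw [hg, hg, hg.dd w]; ring
    have line' : ∀ g : (κ → ℝ) → ℝ, MA g → ∀ s : ℝ, dd z g (a + Pi.single z s + Pi.single w s)
        + dd w g (a + Pi.single z s + Pi.single w s) =
        (dd z g a + dd w g a) + 2 * (dd z (dd w g) a) * s := by
      intro g hg s
      have c1 : dd w (dd z g) = dd z (dd w g) := by
        ext x; simp only [dd, add_right_comm x (Pi.single w 1)]; ring
      have c2 : ∀ g : (κ → ℝ) → ℝ, MA g → ∀ (i : κ) x, dd i (dd i g) x = 0 := by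
        intro g hg i x
        have h1 := hg x i 2
        have : x + Pi.single i (2 : ℝ) = x + Pi.single i 1 + Pi.single i 1 := by
          rw [add_assoc, ← Pi.single_add]; norm_num
        rw [this] at h1
        simp only [dd] at *
        linarith
      have d1 := c2 _ (hg.dd w) z a
      have d2 := c2 g hg z a
      have d3 := c2 g hg w (a + Pi.single z s)
      rw [hg.dd z, hg.dd z, hg.dd w, hg.dd w, c1, (hg.dd w).dd z, d1, d2, d3]
      ring
    have hfj := hf.ma.dd j
    have hW := quad_conv (n0 := dd j f a) (n1 := dd z (dd j f) a + dd w (dd j f) a)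
      (n2 := dd z (dd w (dd j f)) a) (p0 := f a) (p1 := dd z f a + dd w f a)
      (p2 := dd z (dd w f) a) hδ.le ha.pos
      (add_nonneg (ha.dd_nonneg hf.ma z) (ha.dd_nonneg hf.ma w)) (ha.dd2_nonneg hf.ma w z) (by
        intro s
        rw [← line f hf.ma, ← line _ hfj, ← line' f hf.ma, ← line' _ hfj]
        have r1 := hf.ray (a + Pi.single z s + Pi.single w s) j z
        have r2 := hf.ray (a + Pi.single z s + Pi.single w s) j w
        linarith)
    rw [← line f hf.ma, ← line _ hfj, ← line' f hf.ma, ← line' _ hfj] at hW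
    have hq := hT _ hy
    rw [← add_assoc] at hq
    have hpos : 0 < f (a + Pi.single z δ + Pi.single w δ) := by
      rw [add_assoc]; exact ha _ hy
    have r1 := hf.ray (a + Pi.single z δ + Pi.single w δ) j z
    have r2 := hf.ray (a + Pi.single z δ + Pi.single w δ) j w
    have e1 : dd j (TT 1 1 z w f) (a + Pi.single z δ + Pi.single w δ) =
       dd j f (a + Pi.single z δ + Pi.single w δ)
       - dd z (dd j f) (a + Pi.single z δ + Pi.single w δ)
       - dd w (dd j f) (a + Pi.single z δ + Pi.single w δ) := by
      generalize a + Pi.single z δ + Pi.single w δ = x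
      simp only [TT, dd, add_right_comm x (Pi.single j (1:ℝ))]; ring
    rw [e1]
    have e2 : TT 1 1 z w f (a + Pi.single z δ + Pi.single w δ) =
       f (a + Pi.single z δ + Pi.single w δ)
       - dd z f (a + Pi.single z δ + Pi.single w δ)
       - dd w f (a + Pi.single z δ + Pi.single w δ) := by
      simp only [TT]; ring
    rw [e2] at hq ⊢
    have pa := ha.pos
    generalize a + Pi.single z δ + Pi.single w δ = x at *
    generalize f x = P at *
    generalize f a = p0 at *
    generalize dd j f a = n0 at *
    generalize dd j f x = N at *
    generalize dd z f x = Pz at *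
    generalize dd w f x = Pw at *
    generalize dd z (dd j f) x = Nz at *
    generalize dd w (dd j f) x = Nw at *
    have hq' : P ≤ δ * (P - Pz - Pw) := by
      have := mul_le_mul_of_nonneg_left hq hδ.le
      field_simp at this
      linarith
    have hWn : (Nz + Nw) * P - N * (Pz + Pw) ≤ 0 := by linarith
    obtain ⟨W, hWd⟩ : ∃ W, W = (Nz + Nw) * P - N * (Pz + Pw) := ⟨_, rfl⟩
    rw [← hWd] at hW hWn
    have hqp : 0 < P - Pz - Pw := by
      have : 0 < 1 / δ * P := by positivity
      linarith
    obtain ⟨q, hqd⟩ : ∃ q, q = P - Pz - Pw := ⟨_, rfl⟩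
    rw [← hqd] at hq hq' hqp ⊢
    have e3 : (N - Nz - Nw) * P = N * q - W := by rw [hWd, hqd]; ring
    have s1 : -(W * p0) * P ≤ -(W * p0) * (δ * q) :=
      mul_le_mul_of_nonneg_left hq' (by nlinarith)
    have s2 : -(W * p0) * δ ≤ (n0 * P - N * p0) * P := by linarith
    have s3 := mul_le_mul_of_nonneg_right s2 hqp.le
    have s4 : (-(W * p0)) * P ≤ ((n0 * P - N * p0) * q) * P := by linarith
    have s5 := le_of_mul_le_mul_right s4 hpos
    have s6 : ((N - Nz - Nw) * p0) * P ≤ (n0 * q) * P := by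
      have : ((N - Nz - Nw) * p0) * P = (N * q - W) * p0 := by rw [← e3]; ring
      rw [this]; linarith
    exact le_of_mul_le_mul_right s6 hpos
end KS

namespace KS
open Finset
section expectation
variable {ι : Type*} [DecidableEq ι]

/-- The shift vector. -/
noncomputable def vv (t : ℝ) (S R : Finset ι) : ι ⊕ ι → ℂ :=
  Sum.elim (fun i => if i ∈ S then ((1 / t : ℝ) : ℂ) else 0)
    (fun i => if i ∈ R then ((1 / (1 - t) : ℝ) : ℂ) else 0)

/-- The weight of a subset. -/
noncomputable def wt (s : ι → ℝ) (A S : Finset ι) : ℝ := (∏ i ∈ S, s i) * ∏ i ∈ A \ S, (1 - s i)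

/-- The expectation over random subsets of `A`. -/
noncomputable def EE (t : ℝ) (s : ι → ℝ) (A : Finset ι) (F : (ι ⊕ ι → ℂ) → ℂ) : (ι ⊕ ι → ℂ) → ℂ :=
  fun z => ∑ S ∈ A.powerset, (wt s A S : ℂ) * F (z - vv t S (A \ S))

theorem EE_empty (t : ℝ) (s : ι → ℝ) (F : (ι ⊕ ι → ℂ) → ℂ) : EE t s ∅ F = F := by
  ext z
  have : z - vv t (∅ : Finset ι) ∅ = z := by
    ext k; rcases k with k | k <;> simp [vv]
  simp [EE, wt, this]

theorem EE_insert (t : ℝ) (s : ι → ℝ) (F : (ι ⊕ ι → ℂ) → ℂ) {A : Finset ι} {i : ι} (hi : i ∉ A)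
    (z : ι ⊕ ι → ℂ) :
    EE t s (insert i A) F z = (1 - s i) * EE t s A F (z + Pi.single (Sum.inr i) (-((1 / (1 - t) : ℝ) : ℂ)))
      + s i * EE t s A F (z + Pi.single (Sum.inl i) (-((1 / t : ℝ) : ℂ))) := by
  unfold EE
  rw [Finset.sum_powerset_insert hi, Finset.mul_sum, Finset.mul_sum]
  congr 1
  · apply Finset.sum_congr rfl
    intro S hS
    have hS' := Finset.mem_powerset.mp hS
    have hiS : i ∉ S := fun h => hi (hS' h)
    have e1 : insert i A \ S = insert i (A \ S) := Finset.insert_sdiff_of_notMem _ hiS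
    have e2 : i ∉ A \ S := fun h => hi (Finset.mem_sdiff.mp h).1
    have e3 : z - vv t S (insert i A \ S) =
        z + Pi.single (Sum.inr i) (-((1 / (1 - t) : ℝ) : ℂ)) - vv t S (A \ S) := by
      rw [e1]
      ext k
      rcases k with k | k
      · simp [vv]
      · by_cases hk : k = i
        · subst hk; simp [vv, hi, sub_eq_add_neg]
        · simp [vv, hk]
    rw [e3]
    simp only [wt]
    rw [e1, Finset.prod_insert e2]
    push_cast
    ring
  · apply Finset.sum_congr rfl
    intro S hS
    have hS' := Finset.mem_powerset.mp hS
    have hiS : i ∉ S := fun h => hi (hS' h)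
    have e1 : insert i A \ insert i S = A \ S := by
      ext k
      by_cases hk : k = i
      · subst hk; simp [hi]
      · simp [hk]
    have e3 : z - vv t (insert i S) (A \ S) =
        z + Pi.single (Sum.inl i) (-((1 / t : ℝ) : ℂ)) - vv t S (A \ S) := by
      ext k
      rcases k with k | k
      · by_cases hk : k = i
        · subst hk; simp [vv, hiS, sub_eq_add_neg]
        · simp [vv, hk]
      · simp [vv]
    rw [e1, e3]
    simp only [wt]
    rw [e1, Finset.prod_insert hiS]
    push_cast
    ring

theorem EE_TT {t : ℝ} (s : ι → ℝ) {F : (ι ⊕ ι → ℂ) → ℂ} {A : Finset ι} {i : ι}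
    (hi : i ∉ A) (h : MA (EE t s A F)) :
    EE t s (insert i A) F = TT ((s i / t : ℝ) : ℂ) (((1 - s i) / (1 - t) : ℝ) : ℂ) (Sum.inl i) (Sum.inr i)
      (EE t s A F) := by
  ext z
  rw [EE_insert t s F hi, h, h]
  simp only [TT]
  push_cast
  ring

theorem Good_EE {t : ℝ} (h0 : 0 < t) (h1 : t < 1) (s : ι → ℝ) (hs : ∀ i, 0 ≤ s i ∧ s i ≤ 1)
    {F : (ι ⊕ ι → ℂ) → ℂ} (hF : Good F) (A : Finset ι) : Good (EE t s A F) := by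
  induction A using Finset.induction_on with
  | empty => rw [EE_empty]; exact hF
  | insert i A hi ih =>
    rw [EE_TT s hi ih.ma]
    exact ih.TT _ _ (div_nonneg (hs i).1 h0.le)
      (div_nonneg (by linarith [(hs i).2]) (by linarith)) _ _

theorem barrier_s3 [Fintype ι] {t : ℝ} (h0 : 0 < t) (h1 : t < 1) {F : (ι ⊕ ι → ℂ) → ℂ} (hF : Good F)
    {x0 δ : ℝ} (hδ : 0 < δ) (ha : Above (rr F) (fun _ => x0))
    (hb : ∀ i, dd (Sum.inl i) (rr F) (fun _ => x0) + dd (Sum.inr i) (rr F) (fun _ => x0) ≤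
      (1 - 1 / δ) * rr F (fun _ => x0)) (x : ℝ) (hx : x0 + δ ≤ x) :
    EE t (fun _ => t) Finset.univ F (fun _ => (x : ℂ)) ≠ 0 := by
  have hs : ∀ i : ι, 0 ≤ (fun _ => t) i ∧ (fun _ => t) i ≤ 1 := fun _ => ⟨h0.le, h1.le⟩
  have key : ∀ A : Finset ι, 
      Above (rr (EE t (fun _ => t) A F))
        ((fun _ => x0) + ∑ i ∈ A, (Pi.single (Sum.inl i) δ + Pi.single (Sum.inr i) δ)) ∧
      ∀ i, dd (Sum.inl i) (rr (EE t (fun _ => t) A F))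
          ((fun _ => x0) + ∑ i ∈ A, (Pi.single (Sum.inl i) δ + Pi.single (Sum.inr i) δ)) +
        dd (Sum.inr i) (rr (EE t (fun _ => t) A F))
          ((fun _ => x0) + ∑ i ∈ A, (Pi.single (Sum.inl i) δ + Pi.single (Sum.inr i) δ)) ≤
        (1 - 1 / δ) * rr (EE t (fun _ => t) A F)
          ((fun _ => x0) + ∑ i ∈ A, (Pi.single (Sum.inl i) δ + Pi.single (Sum.inr i) δ)) := by
    intro A
    induction A using Finset.induction_on with
    | empty => 
      rw [EE_empty]
      simp only [Finset.sum_empty, add_zero]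
      exact ⟨ha, hb⟩
    | insert k A hk ih =>
      obtain ⟨ih1, ih2⟩ := ih
      have g := Good_EE h0 h1 (fun _ => t) hs hF A
      have e : rr (EE t (fun _ => t) (insert k A) F) = TT 1 1 (Sum.inl k) (Sum.inr k)
          (rr (EE t (fun _ => t) A F)) := by
        rw [EE_TT _ hk g.ma, rr_TT, div_self h0.ne', div_self (by linarith)]
      have ep : ((fun _ => x0) + ∑ i ∈ insert k A, (Pi.single (Sum.inl i) δ + Pi.single (Sum.inr i) δ)
           : ι ⊕ ι → ℝ) = ((fun _ => x0) + ∑ i ∈ A, (Pi.single (Sum.inl i) δ + Pi.single (Sum.inr i) δ))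
            + Pi.single (Sum.inl k) δ + Pi.single (Sum.inr k) δ := by
        rw [Finset.sum_insert hk]; abel
      rw [e, ep]
      obtain ⟨b1, b2⟩ := barrier_step g.RG ih1 (Sum.inl k) (Sum.inr k) hδ (ih2 k)
      refine ⟨b1, fun i => ?_⟩
      have pa := ih1.pos
      have pq := b1.pos
      have c1 := b2 (Sum.inl i)
      have c2 := b2 (Sum.inr i)
      have c3 := mul_le_mul_of_nonneg_right (ih2 i) pq.le
      refine le_of_mul_le_mul_right ?_ pa
      linarith
  obtain ⟨k1, -⟩ := key Finset.univ
  have ep : ((fun _ => x0) + ∑ i ∈ (Finset.univ : Finset ι), (Pi.single (Sum.inl i) δ + Pi.single (Sum.inr i) δ)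
           : ι ⊕ ι → ℝ) = fun _ => x0 + δ := by
    ext k
    rcases k with k | k <;> simp [Finset.sum_apply, Pi.single_apply]
  rw [ep] at k1
  have h2 := k1 (fun _ => x - (x0 + δ)) (fun _ => by simpa using hx)
  have e3 : ((fun _ => x0 + δ) + (fun _ => x - (x0 + δ)) : ι ⊕ ι → ℝ) = fun _ => x := by
    ext k; simp
  rw [e3] at h2
  intro hcon
  simp only [rr, hcon] at h2
  simp at h2

end expectation

section rounding
open Polynomial

theorem taylor_pos (L : ℝ) (P : ℂ[X]) (hm : P.Monic) (hr : ∀ x, P.eval x = 0 → x.im = 0)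
    (hL : ∀ x : ℝ, L ≤ x → P.eval (x : ℂ) ≠ 0) (k : ℕ) (hk : k ≤ P.natDegree) :
    0 < ((taylor (L : ℂ) P).coeff k).re := by
  have key : ∀ m : Multiset ℂ, (∀ r ∈ m, r.im = 0 ∧ r.re < L) → ∃ p : ℝ[X],
      taylor (L : ℂ) ((m.map fun r => X - C r).prod) = p.map Complex.ofRealHom ∧
      p.natDegree ≤ Multiset.card m ∧ (∀ k, 0 ≤ p.coeff k) ∧ ∀ k ≤ Multiset.card m, 0 < p.coeff k := by
    intro m
    induction m using Multiset.induction_on with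
    | empty =>
      intro _
      refine ⟨1, by simp [taylor_one], by simp, ?_, ?_⟩
      · intro k
        rw [coeff_one]; split_ifs <;> simp
      · intro k hk
        simp at hk
        subst hk; simp
    | cons r m ih =>
      intro h
      obtain ⟨p, p1, p2, p3, p4⟩ := ih (fun r' hr' => h r' (Multiset.mem_cons_of_mem hr'))
      obtain ⟨hr1, hr2⟩ := h r (Multiset.mem_cons_self r m)
      have hrr : r = (r.re : ℂ) := by apply Complex.ext <;> simp [hr1]
      have hc : ∀ k, ((X + C (L - r.re)) * p).coeff (k + 1) = p.coeff k + (L - r.re) * p.coeff (k + 1) := by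
        intro k
        rw [add_mul, coeff_add, coeff_X_mul, coeff_C_mul]
      have hc0 : ((X + C (L - r.re)) * p).coeff 0 = (L - r.re) * p.coeff 0 := by
        simp [mul_coeff_zero]
      have hp : 0 < L - r.re := by linarith
      refine ⟨(X + C (L - r.re)) * p, ?_, ?_, ?_, ?_⟩
      · rw [Multiset.map_cons, Multiset.prod_cons, taylor_mul, p1, Polynomial.map_mul]
        congr 1
        rw [hrr]
        simp [taylor_X, taylor_C]
        ring
      · refine natDegree_mul_le.trans ?_
        rw [natDegree_X_add_C, Multiset.card_cons]
        omega
      · intro k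
        cases k with
        | zero => rw [hc0]; exact mul_nonneg hp.le (p3 0)
        | succ k => rw [hc]; exact add_nonneg (p3 k) (mul_nonneg hp.le (p3 _))
      · intro k hk
        rw [Multiset.card_cons] at hk
        cases k with
        | zero => rw [hc0]; exact mul_pos hp (p4 0 (Nat.zero_le _))
        | succ k =>
          rw [hc]; exact add_pos_of_pos_of_nonneg (p4 k (by omega)) (mul_nonneg hp.le (p3 _))
  have hsp := IsAlgClosed.splits P
  obtain ⟨p, p1, -, -, p4⟩ := key P.roots (by
    intro r hr'
    have h0 : P.eval r = 0 := (mem_roots'.mp hr').2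
    have h1 := hr r h0
    refine ⟨h1, ?_⟩
    by_contra hcon
    push Not at hcon
    apply hL r.re hcon
    have hrr : r = (r.re : ℂ) := by apply Complex.ext <;> simp [h1]
    rw [← hrr]; exact h0)
  rw [← hsp.eq_prod_roots_of_monic hm] at p1
  rw [p1, coeff_map]
  simpa using p4 k (by rw [← hsp.natDegree_eq_card_roots]; exact hk)

theorem no_roots_of_taylor (L : ℝ) (P : ℂ[X]) (hm : P.Monic)
    (hc : ∀ k ≤ P.natDegree, 0 ≤ ((taylor (L : ℂ) P).coeff k).re)
    (h0 : 0 < (P.eval (L : ℂ)).re) (x : ℝ) (hx : L ≤ x) : P.eval (x : ℂ) ≠ 0 := by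
  rcases hx.eq_or_lt with h | h
  · subst h; intro hcon; rw [hcon] at h0; simp at h0
  · have e : P.eval (x : ℂ) = (taylor (L : ℂ) P).eval ((x - L : ℝ) : ℂ) := by
      rw [taylor_eval]; congr 1; push_cast; ring
    have : 0 < (P.eval (x : ℂ)).re := by
      rw [e, eval_eq_sum_range, natDegree_taylor, Complex.re_sum]
      have hre : ∀ k, ((taylor (L : ℂ) P).coeff k * ((x - L : ℝ) : ℂ) ^ k).re =
          ((taylor (L : ℂ) P).coeff k).re * (x - L) ^ k := by
        intro k
        rw [← Complex.ofReal_pow, Complex.re_mul_ofReal]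
      simp only [hre]
      have hxl : 0 < x - L := by linarith
      apply Finset.sum_pos'
      · intro k hk
        exact mul_nonneg (hc k (by simpa [Nat.lt_succ_iff] using hk)) (by positivity)
      · refine ⟨P.natDegree, by simp, ?_⟩
        have : (taylor (L : ℂ) P).coeff P.natDegree = 1 := by
          rw [coeff_taylor_natDegree]; exact hm
        rw [this]
        simp
        positivity
    intro hcon
    rw [hcon] at this
    simp at this

/-- The segment between two polynomials. -/
noncomputable def seg (f g : ℂ[X]) (r : ℝ) : ℂ[X] := C ((1 - r : ℝ) : ℂ) * f + C (r : ℂ) * g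

theorem round_core (L : ℝ) (n : ℕ) (f g : ℂ[X])
    (hm : ∀ r : ℝ, 0 ≤ r → r ≤ 1 → (seg f g r).Monic ∧ (seg f g r).natDegree = n ∧
      ∀ x, (seg f g r).eval x = 0 → x.im = 0)
    (hf : ∀ x : ℝ, L ≤ x → f.eval (x : ℂ) ≠ 0) (hg : 0 < (g.eval (L : ℂ)).re) :
    ∀ x : ℝ, L ≤ x → g.eval (x : ℂ) ≠ 0 := by
  have s0 : seg f g 0 = f := by simp [seg]
  have s1 : seg f g 1 = g := by simp [seg]
  have hcoef : ∀ r k, ((taylor (L : ℂ) (seg f g r)).coeff k).re =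
      (1 - r) * ((taylor (L : ℂ) f).coeff k).re + r * ((taylor (L : ℂ) g).coeff k).re := by
    intro r k
    simp only [seg, map_add, taylor_mul, taylor_C, coeff_add, coeff_C_mul, Complex.add_re,
      Complex.re_ofReal_mul]
  have hev : ∀ r, ((seg f g r).eval (L : ℂ)).re =
      (1 - r) * (f.eval (L : ℂ)).re + r * (g.eval (L : ℂ)).re := by
    intro r
    simp only [seg, eval_add, eval_mul, eval_C, Complex.add_re, Complex.re_ofReal_mul]
  obtain ⟨m0, n0, r0⟩ := hm 0 le_rfl zero_le_one
  obtain ⟨m1, n1, r1⟩ := hm 1 zero_le_one le_rfl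
  rw [s0] at m0 n0 r0
  have hfpos := taylor_pos L f m0 r0 hf
  have hf0 : 0 < (f.eval (L : ℂ)).re := by
    have := hfpos 0 (Nat.zero_le _)
    rwa [taylor_coeff_zero] at this
  have hevpos : ∀ r : ℝ, 0 ≤ r → r ≤ 1 → 0 < ((seg f g r).eval (L : ℂ)).re := by
    intro r h0 h1
    rw [hev]
    rcases h0.eq_or_lt with h | h
    · subst h; simpa using hf0
    · have : 0 ≤ (1 - r) * (f.eval (L : ℂ)).re := mul_nonneg (by linarith) hf0.le
      have : 0 < r * (g.eval (L : ℂ)).re := mul_pos h hg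
      linarith
  let T : Set ℝ := {r | ∀ k ≤ n, 0 ≤ ((taylor (L : ℂ) (seg f g r)).coeff k).re}
  have hcont : ∀ k, Continuous fun r => ((taylor (L : ℂ) (seg f g r)).coeff k).re := by
    intro k
    simp only [hcoef]
    fun_prop
  have hTc : IsClosed T := by
    have : T = ⋂ k, ⋂ (_ : k ≤ n), {r | 0 ≤ ((taylor (L : ℂ) (seg f g r)).coeff k).re} := by
      ext r; simp [T]
    rw [this]
    exact isClosed_iInter fun k => isClosed_iInter fun _ => isClosed_le continuous_const (hcont k)
  have hsub : Set.Icc (0 : ℝ) 1 ⊆ T := by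
    apply IsClosed.Icc_subset_of_forall_mem_nhdsWithin
    · exact hTc.inter isClosed_Icc
    · intro k hk
      rw [s0]
      exact (hfpos k (by omega)).le
    · rintro r ⟨hrT, hr0, hr1⟩
      obtain ⟨m, nn, rt⟩ := hm r hr0 hr1.le
      have good := no_roots_of_taylor L _ m (by rw [nn]; exact hrT) (hevpos r hr0 hr1.le)
      have pos := taylor_pos L _ m rt good
      rw [nn] at pos
      apply mem_nhdsWithin_of_mem_nhds
      have : (⋂ k ∈ Finset.range (n + 1), {r | 0 < ((taylor (L : ℂ) (seg f g r)).coeff k).re}) ∈ nhds r := by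
        rw [Filter.biInter_finset_mem]
        intro k hk
        exact (isOpen_lt continuous_const (hcont k)).mem_nhds (pos k (by simpa [Nat.lt_succ_iff] using hk))
      filter_upwards [this] with y hy k hk
      simp only [Set.mem_iInter] at hy
      exact (hy k (by simpa [Nat.lt_succ_iff] using hk)).le
  have h1 := hsub (Set.right_mem_Icc.mpr zero_le_one)
  rw [s1] at m1 n1
  apply no_roots_of_taylor L g m1 _ hg
  intro k hk
  have := h1 k (by omega)
  rwa [s1] at this

theorem round_two (L : ℝ) (n : ℕ) (f g : ℂ[X])
    (hm : ∀ r : ℝ, 0 ≤ r → r ≤ 1 → (seg f g r).Monic ∧ (seg f g r).natDegree = n ∧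
      ∀ x, (seg f g r).eval x = 0 → x.im = 0) (r : ℝ) (h0 : 0 ≤ r) (h1 : r ≤ 1)
    (hf : ∀ x : ℝ, L ≤ x → (seg f g r).eval (x : ℂ) ≠ 0) :
    (∀ x : ℝ, L ≤ x → f.eval (x : ℂ) ≠ 0) ∨ (∀ x : ℝ, L ≤ x → g.eval (x : ℂ) ≠ 0) := by
  obtain ⟨m, nn, rt⟩ := hm r h0 h1
  have hp : 0 < ((seg f g r).eval (L : ℂ)).re := by
    have := taylor_pos L _ m rt hf 0 (Nat.zero_le _)
    rwa [taylor_coeff_zero] at this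
  have hev : ((seg f g r).eval (L : ℂ)).re =
      (1 - r) * (f.eval (L : ℂ)).re + r * (g.eval (L : ℂ)).re := by
    simp only [seg, eval_add, eval_mul, eval_C, Complex.add_re, Complex.re_ofReal_mul]
  by_cases hg : 0 < (g.eval (L : ℂ)).re
  · right
    apply round_core L n (seg f g r) g _ hf hg
    intro q hq0 hq1
    have : seg (seg f g r) g q = seg f g (r + q * (1 - r)) := by
      simp only [seg]
      simp only [Complex.ofReal_sub, Complex.ofReal_add, Complex.ofReal_mul, map_add, map_sub, map_mul]
      simp only [Complex.ofReal_one, map_one]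
      ring
    rw [this]
    exact hm _ (by nlinarith) (by nlinarith)
  · left
    have hf' : 0 < (f.eval (L : ℂ)).re := by
      by_contra hcon
      push Not at hcon hg
      rw [hev] at hp
      nlinarith
    apply round_core L n (seg f g r) f _ hf hf'
    intro q hq0 hq1
    have : seg (seg f g r) f q = seg f g (r * (1 - q)) := by
      simp only [seg]
      simp only [Complex.ofReal_sub, Complex.ofReal_mul, map_sub, map_mul]
      simp only [Complex.ofReal_one, map_one]
      ring
    rw [this]
    exact hm _ (by nlinarith) (by nlinarith)

theorem round_all {ι : Type*} [DecidableEq ι] [Fintype ι] (L : ℝ) (n : ℕ) (Q : (ι → ℝ) → ℂ[X])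
    (hm : ∀ s : ι → ℝ, (∀ i, 0 ≤ s i ∧ s i ≤ 1) → (Q s).Monic ∧ (Q s).natDegree = n ∧
      ∀ x, (Q s).eval x = 0 → x.im = 0)
    (haff : ∀ s i r, Q (Function.update s i r) =
      seg (Q (Function.update s i 0)) (Q (Function.update s i 1)) r)
    (s0 : ι → ℝ) (hs0 : ∀ i, 0 ≤ s0 i ∧ s0 i ≤ 1)
    (h : ∀ x : ℝ, L ≤ x → (Q s0).eval (x : ℂ) ≠ 0) :
    ∃ S : Finset ι, ∀ x : ℝ, L ≤ x → (Q (fun i => if i ∈ S then 1 else 0)).eval (x : ℂ) ≠ 0 := by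
  have key : ∀ A : Finset ι, ∃ s : ι → ℝ, (∀ i, 0 ≤ s i ∧ s i ≤ 1) ∧ (∀ i ∈ A, s i = 0 ∨ s i = 1) ∧
      ∀ x : ℝ, L ≤ x → (Q s).eval (x : ℂ) ≠ 0 := by
    intro A
    induction A using Finset.induction_on with
    | empty => exact ⟨s0, hs0, by simp, h⟩
    | insert i A hi ih =>
      obtain ⟨s, h1, h2, h3⟩ := ih
      have hup : ∀ r : ℝ, 0 ≤ r → r ≤ 1 → ∀ k, 0 ≤ Function.update s i r k ∧ Function.update s i r k ≤ 1 := by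
        intro r hr0 hr1 k
        by_cases hk : k = i
        · subst hk; simp [hr0, hr1]
        · simp [hk, h1 k]
      have := round_two L n (Q (Function.update s i 0)) (Q (Function.update s i 1)) (by
        intro r hr0 hr1
        rw [← haff]
        exact hm _ (hup r hr0 hr1)) (s i) (h1 i).1 (h1 i).2 (by
        rw [← haff, Function.update_eq_self]; exact h3)
      rcases this with h | h
      · refine ⟨_, hup 0 le_rfl zero_le_one, ?_, h⟩
        intro k hk
        by_cases hki : k = i
        · subst hki; simp
        · simp [hki]; exact h2 k (Finset.mem_of_mem_insert_of_ne hk hki)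
      · refine ⟨_, hup 1 zero_le_one le_rfl, ?_, h⟩
        intro k hk
        by_cases hki : k = i
        · subst hki; simp
        · simp [hki]; exact h2 k (Finset.mem_of_mem_insert_of_ne hk hki)
  obtain ⟨s, -, h2, h3⟩ := key Finset.univ
  refine ⟨Finset.univ.filter fun i => s i = 1, ?_⟩
  have : (fun i => if i ∈ Finset.univ.filter (fun i => s i = 1) then (1 : ℝ) else 0) = s := by
    ext i
    rcases h2 i (Finset.mem_univ i) with h | h <;> simp [h]
  rw [this]
  exact h3

end rounding
end KS

namespace KS
open Finset
section det
open Matrix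

theorem det_affine {n : ℕ} (M : Matrix (Fin n) (Fin n) ℂ) (a b : Fin n → ℂ) :
    ∃ c, ∀ s : ℂ, (M + s • vecMulVec a b).det = M.det + s * c := by
  let X : Matrix (Fin n ⊕ Unit) (Fin n ⊕ Unit) ℂ := fromBlocks M (replicateCol Unit (-a)) 0 1
  refine ⟨(X.updateRow (Sum.inr ()) (Sum.elim b 0)).det, fun s => ?_⟩
  have h1 : (M + s • vecMulVec a b).det =
      (fromBlocks M (replicateCol Unit (-a)) (s • replicateRow Unit b) 1).det := by
    rw [det_fromBlocks_one₂₂]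
    congr 1
    ext i j
    simp [Matrix.mul_apply, vecMulVec_apply]
  have h2 : M.det = X.det := by
    simp [X, det_fromBlocks_one₂₂]
  have h3 : fromBlocks M (replicateCol Unit (-a)) (s • replicateRow Unit b) 1 =
      X.updateRow (Sum.inr ()) (X (Sum.inr ()) + s • (Sum.elim b 0 : Fin n ⊕ Unit → ℂ)) := by
    ext i j
    rcases i with i | i <;> rcases j with j | j <;> simp [X, updateRow_apply]
  rw [h1, h2, h3, det_updateRow_add, det_updateRow_smul, updateRow_eq_self]

theorem outer_eq {d : ℕ} (u : EuclideanSpace ℂ (Fin d)) :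
    outer u = vecMulVec (fun i => u i) (fun i => starRingEnd ℂ (u i)) := by
  ext i j; simp [outer, vecMulVec_apply]

variable {d m : ℕ}

/-- The determinant polynomial. -/
noncomputable def DD (u : Fin m → EuclideanSpace ℂ (Fin d)) (z : Fin m → ℂ) : ℂ :=
  (∑ i, z i • outer (u i)).det

theorem DD_add (u : Fin m → EuclideanSpace ℂ (Fin d)) (z : Fin m → ℂ) (i : Fin m) (s : ℂ) :
    DD u (z + Pi.single i s) = ((∑ i, z i • outer (u i)) + s • outer (u i)).det := by
  unfold DD
  congr 1
  simp only [Pi.add_apply, add_smul, Finset.sum_add_distrib]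
  congr 1
  rw [Finset.sum_eq_single i]
  · simp
  · intro k _ hk; simp [hk]
  · simp

theorem DD_MA (u : Fin m → EuclideanSpace ℂ (Fin d)) : MA (DD u) := by
  intro z i s
  obtain ⟨c, hc⟩ := det_affine (∑ i, z i • outer (u i)) (fun k => u i k) (fun k => starRingEnd ℂ (u i k))
  rw [← outer_eq] at hc
  simp only [dd, DD_add, hc]
  simp only [DD]
  ring

theorem DD_cont (u : Fin m → EuclideanSpace ℂ (Fin d)) : Continuous (DD u) := by
  unfold DD
  apply Continuous.matrix_det
  fun_prop

theorem outer_herm (u : EuclideanSpace ℂ (Fin d)) : (outer u)ᴴ = outer u := by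
  ext i j; simp [outer, conjTranspose_apply, mul_comm]

theorem DD_conj (u : Fin m → EuclideanSpace ℂ (Fin d)) (z : Fin m → ℂ) :
    DD u (fun i => starRingEnd ℂ (z i)) = starRingEnd ℂ (DD u z) := by
  unfold DD
  rw [starRingEnd_apply, ← det_conjTranspose, conjTranspose_sum]
  simp only [conjTranspose_smul, outer_herm]
  rfl

theorem outer_mulVec (u : EuclideanSpace ℂ (Fin d)) (x : Fin d → ℂ) :
    outer u *ᵥ x = (∑ j, starRingEnd ℂ (u j) * x j) • (fun i => u i) := by
  ext i
  simp only [mulVec, dotProduct, outer, of_apply, Pi.smul_apply, smul_eq_mul, Finset.sum_mul]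
  exact Finset.sum_congr rfl fun j _ => by ring

theorem outer_quad (u : EuclideanSpace ℂ (Fin d)) (x : Fin d → ℂ) :
    star x ⬝ᵥ (outer u *ᵥ x) = (Complex.normSq (∑ j, starRingEnd ℂ (u j) * x j) : ℂ) := by
  rw [outer_mulVec, dotProduct_smul, Complex.normSq_eq_conj_mul_self, smul_eq_mul, mul_comm]
  congr 1
  rw [map_sum]
  simp only [dotProduct, Pi.star_apply, map_mul, Complex.conj_conj]
  exact Finset.sum_congr rfl fun j _ => by rw [mul_comm]; rfl

theorem DD_stab (u : Fin m → EuclideanSpace ℂ (Fin d)) (hu : ∑ i, outer (u i) = 1) (z : Fin m → ℂ)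
    (hz : ∀ i, 0 < (z i).im) : DD u z ≠ 0 := by
  intro h0
  obtain ⟨x, hx, hMx⟩ := exists_mulVec_eq_zero_iff.mpr h0
  apply hx
  have h1 : ∑ i, z i * (Complex.normSq (∑ j, starRingEnd ℂ (u i j) * x j) : ℂ) = 0 := by
    have := congrArg (fun y => star x ⬝ᵥ y) hMx
    simp only [sum_mulVec, smul_mulVec, dotProduct_zero, dotProduct_sum, dotProduct_smul, outer_quad,
      smul_eq_mul] at this
    exact this
  have h2 := congrArg Complex.im h1
  simp only [Complex.im_sum, Complex.im_mul_ofReal, Complex.zero_im] at h2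
  have h3 := (Finset.sum_eq_zero_iff_of_nonneg (fun i _ =>
    mul_nonneg (hz i).le (Complex.normSq_nonneg _))).mp h2
  have h4 : ∀ i, outer (u i) *ᵥ x = 0 := by
    intro i
    have := h3 i (Finset.mem_univ i)
    have h5 : ∑ j, starRingEnd ℂ (u i j) * x j = 0 := by
      rcases mul_eq_zero.mp this with h | h
      · exact absurd h (hz i).ne'
      · exact Complex.normSq_eq_zero.mp h
    rw [outer_mulVec, h5, zero_smul]
  have : x = (∑ i, outer (u i)) *ᵥ x := by rw [hu, one_mulVec]
  rw [this, sum_mulVec]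
  exact Finset.sum_eq_zero fun i _ => h4 i

/-- The product polynomial. -/
noncomputable def FF (u : Fin m → EuclideanSpace ℂ (Fin d)) (z : Fin m ⊕ Fin m → ℂ) : ℂ :=
  DD u (fun i => z (Sum.inl i)) * DD u (fun i => z (Sum.inr i))

theorem shift_ll {R : Type*} [CommRing R] (z : Fin m ⊕ Fin m → R) (i : Fin m) (s : R) :
    (fun k => (z + Pi.single (Sum.inl i) s : Fin m ⊕ Fin m → R) (Sum.inl k)) =
      (fun k => z (Sum.inl k)) + Pi.single i s := by
  ext k; by_cases h : k = i
  · subst h; simp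
  · simp [h]

theorem shift_rr {R : Type*} [CommRing R] (z : Fin m ⊕ Fin m → R) (i : Fin m) (s : R) :
    (fun k => (z + Pi.single (Sum.inr i) s : Fin m ⊕ Fin m → R) (Sum.inr k)) =
      (fun k => z (Sum.inr k)) + Pi.single i s := by
  ext k; by_cases h : k = i
  · subst h; simp
  · simp [h]

theorem shift_lr {R : Type*} [CommRing R] (z : Fin m ⊕ Fin m → R) (i : Fin m) (s : R) :
    (fun k => (z + Pi.single (Sum.inl i) s : Fin m ⊕ Fin m → R) (Sum.inr k)) =
      (fun k => z (Sum.inr k)) := by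
  ext k; simp

theorem shift_rl {R : Type*} [CommRing R] (z : Fin m ⊕ Fin m → R) (i : Fin m) (s : R) :
    (fun k => (z + Pi.single (Sum.inr i) s : Fin m ⊕ Fin m → R) (Sum.inl k)) =
      (fun k => z (Sum.inl k)) := by
  ext k; simp

theorem FF_dd_l (u : Fin m → EuclideanSpace ℂ (Fin d)) (z : Fin m ⊕ Fin m → ℂ) (i : Fin m) :
    dd (Sum.inl i) (FF u) z = dd i (DD u) (fun i => z (Sum.inl i)) * DD u (fun i => z (Sum.inr i)) := by
  simp only [dd, FF, shift_ll, shift_lr]; ring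

theorem FF_dd_r (u : Fin m → EuclideanSpace ℂ (Fin d)) (z : Fin m ⊕ Fin m → ℂ) (i : Fin m) :
    dd (Sum.inr i) (FF u) z = DD u (fun i => z (Sum.inl i)) * dd i (DD u) (fun i => z (Sum.inr i)) := by
  simp only [dd, FF, shift_rr, shift_rl]; ring

theorem FF_good (u : Fin m → EuclideanSpace ℂ (Fin d)) (hu : ∑ i, outer (u i) = 1) : Good (FF u) where
  ma := by
    intro z k s
    rcases k with i | i
    · rw [FF_dd_l]; simp only [FF, shift_ll, shift_lr, DD_MA u _ i s]; ring
    · rw [FF_dd_r]; simp only [FF, shift_rr, shift_rl, DD_MA u _ i s]; ring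
  cont := by
    have := DD_cont u
    unfold FF
    fun_prop
  conj := by
    intro z
    simp only [FF, map_mul, ← DD_conj]
  stab := by
    intro z hz
    exact mul_ne_zero (DD_stab u hu _ fun i => hz _) (DD_stab u hu _ fun i => hz _)

theorem DD_const (u : Fin m → EuclideanSpace ℂ (Fin d)) (hu : ∑ i, outer (u i) = 1) (x : ℂ) :
    DD u (fun _ => x) = x ^ d := by
  simp [DD, ← Finset.smul_sum, hu]

theorem DD_dd_const (u : Fin m → EuclideanSpace ℂ (Fin d)) (hu : ∑ i, outer (u i) = 1) (x : ℝ)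
    (hx : 0 < x) (i : Fin m) :
    dd i (DD u) (fun _ => (x : ℂ)) = (x : ℂ) ^ d * ((‖u i‖ ^ 2 / x : ℝ) : ℂ) := by
  have hx' : (x : ℂ) ≠ 0 := by exact_mod_cast hx.ne'
  have h1 : (‖u i‖ ^ 2 : ℝ) = ∑ j, ((starRingEnd ℂ) (u i j)) * u i j := by
    rw [EuclideanSpace.norm_sq_eq]
    push_cast
    exact Finset.sum_congr rfl fun j _ => by
      rw [← Complex.normSq_eq_conj_mul_self, Complex.normSq_eq_norm_sq]; push_cast; rfl
  simp only [dd, DD_add, DD_const u hu]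
  rw [← Finset.smul_sum, hu]
  have e : (x : ℂ) • (1 : Matrix (Fin d) (Fin d) ℂ) + (1 : ℂ) • outer (u i) =
      (x : ℂ) • (1 + replicateCol Unit (fun k => (x : ℂ)⁻¹ * u i k) *
        replicateRow Unit (fun k => starRingEnd ℂ (u i k))) := by
    ext a b
    simp [outer, Matrix.mul_apply]
    field_simp
  rw [e, det_smul, det_one_add_replicateCol_mul_replicateRow, Fintype.card_fin]
  have e2 : (fun k => starRingEnd ℂ (u i k)) ⬝ᵥ (fun k => (x : ℂ)⁻¹ * u i k) = ((‖u i‖ ^ 2 / x : ℝ) : ℂ) := by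
    rw [Complex.ofReal_div, h1, Finset.sum_div]
    simp only [dotProduct]
    exact Finset.sum_congr rfl fun j _ => by field_simp
  rw [e2]
  ring

open scoped ComplexOrder in
theorem outer_psd (u : EuclideanSpace ℂ (Fin d)) : (outer u).PosSemidef := by
  rw [outer_eq]
  exact posSemidef_vecMulVec_self_star _

open scoped ComplexOrder in
theorem DD_pos (u : Fin m → EuclideanSpace ℂ (Fin d)) (hu : ∑ i, outer (u i) = 1) (x : ℝ)
    (hx : 0 < x) (y : Fin m → ℝ) (hy : ∀ i, 0 ≤ y i) :
    0 < DD u (fun i => ((x + y i : ℝ) : ℂ)) := by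
  have e : ∑ i, ((x + y i : ℝ) : ℂ) • outer (u i) =
      (x : ℂ) • (1 : Matrix (Fin d) (Fin d) ℂ) + ∑ i, ((y i : ℝ) : ℂ) • outer (u i) := by
    rw [← hu, Finset.smul_sum, ← Finset.sum_add_distrib]
    exact Finset.sum_congr rfl fun i _ => by rw [← add_smul]; push_cast; rfl
  unfold DD
  rw [e]
  apply PosDef.det_pos
  apply PosDef.add_posSemidef
  · exact PosDef.one.smul (by exact_mod_cast hx)
  · exact posSemidef_sum _ fun i _ => (outer_psd (u i)).smul (by exact_mod_cast hy i)

open scoped ComplexOrder in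
theorem FF_above (u : Fin m → EuclideanSpace ℂ (Fin d)) (hu : ∑ i, outer (u i) = 1) (x : ℝ)
    (hx : 0 < x) : Above (rr (FF u)) (fun _ => x) := by
  intro y hy
  have h := mul_pos (DD_pos u hu x hx (fun i => y (Sum.inl i)) (fun i => hy _))
    (DD_pos u hu x hx (fun i => y (Sum.inr i)) (fun i => hy _))
  exact (Complex.pos_iff.mp h).1

theorem FF_bound (u : Fin m → EuclideanSpace ℂ (Fin d)) (hu : ∑ i, outer (u i) = 1) (x c ε : ℝ)
    (hx : 0 < x) (hε : ∀ i, ‖u i‖ ^ 2 ≤ ε) (hc : 2 * ε / x ≤ c) (i : Fin m) :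
    dd (Sum.inl i) (rr (FF u)) (fun _ => x) + dd (Sum.inr i) (rr (FF u)) (fun _ => x) ≤
      c * rr (FF u) (fun _ => x) := by
  simp only [← rr_dd]
  simp only [rr, FF_dd_l, FF_dd_r, DD_dd_const u hu x hx, FF, DD_const u hu]
  have e1 : (x : ℂ) ^ d * ((‖u i‖ ^ 2 / x : ℝ) : ℂ) * (x : ℂ) ^ d =
    ((x ^ d * (‖u i‖ ^ 2 / x) * x ^ d : ℝ) : ℂ) := by push_cast; ring
  have e2 : (x : ℂ) ^ d * ((x : ℂ) ^ d * ((‖u i‖ ^ 2 / x : ℝ) : ℂ)) =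
    ((x ^ d * (‖u i‖ ^ 2 / x) * x ^ d : ℝ) : ℂ) := by push_cast; ring
  have e3 : (x : ℂ) ^ d * (x : ℂ) ^ d = ((x ^ d * x ^ d : ℝ) : ℂ) := by push_cast; ring
  rw [e1, e2, e3, Complex.ofReal_re, Complex.ofReal_re]
  have h1 : 2 * (‖u i‖ ^ 2 / x) ≤ c := by
    refine le_trans ?_ hc
    rw [← mul_div_assoc]
    have := hε i
    gcongr
  have := mul_le_mul_of_nonneg_right h1 (by positivity : 0 ≤ x ^ d * x ^ d)
  linarith

end det

section polys
open Polynomial Matrix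
variable {d m : ℕ}

/-- The polynomial attached to a subset. -/
noncomputable def chi (u : Fin m → EuclideanSpace ℂ (Fin d)) (t : ℝ) (S : Finset (Fin m)) : ℂ[X] :=
  (((1 / t : ℝ) : ℂ) • ∑ i ∈ S, outer (u i)).charpoly *
    (((1 / (1 - t) : ℝ) : ℂ) • ∑ i ∈ Finset.univ \ S, outer (u i)).charpoly

/-- The expected polynomial. -/
noncomputable def QQ (u : Fin m → EuclideanSpace ℂ (Fin d)) (t : ℝ) (s : Fin m → ℝ) : ℂ[X] :=
  ∑ S ∈ (Finset.univ : Finset (Fin m)).powerset, C (wt s Finset.univ S : ℂ) * chi u t S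

theorem DD_charpoly (u : Fin m → EuclideanSpace ℂ (Fin d)) (hu : ∑ i, outer (u i) = 1)
    (S : Finset (Fin m)) (c x : ℂ) :
    DD u (fun i => x - if i ∈ S then c else 0) = (c • ∑ i ∈ S, outer (u i)).charpoly.eval x := by
  rw [eval_charpoly]
  unfold DD
  congr 1
  simp only [sub_smul, Finset.sum_sub_distrib, ← Finset.smul_sum, hu, ite_smul, zero_smul]
  rw [Finset.sum_ite_mem, Finset.univ_inter, ← Finset.smul_sum]
  congr 1
  ext a b
  simp [Matrix.one_apply, Matrix.diagonal_apply]

theorem QQ_eval (u : Fin m → EuclideanSpace ℂ (Fin d)) (hu : ∑ i, outer (u i) = 1) (t : ℝ)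
    (s : Fin m → ℝ) (x : ℂ) :
    (QQ u t s).eval x = EE t s Finset.univ (FF u) (fun _ => x) := by
  simp only [QQ, EE, eval_finsetSum, eval_mul, eval_C, chi, ← DD_charpoly u hu]
  rfl

theorem wt_sum (s : Fin m → ℝ) : ∑ S ∈ (Finset.univ : Finset (Fin m)).powerset, wt s Finset.univ S = 1 := by
  have := Finset.prod_add (fun i => s i) (fun i => 1 - s i) (Finset.univ : Finset (Fin m))
  simp only [wt]
  rw [← this]
  simp

theorem chi_monic (u : Fin m → EuclideanSpace ℂ (Fin d)) (t : ℝ) (S : Finset (Fin m)) :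
    (chi u t S).Monic ∧ (chi u t S).natDegree = d + d := by
  have h1 := charpoly_monic (((1 / t : ℝ) : ℂ) • ∑ i ∈ S, outer (u i))
  have h2 := charpoly_monic (((1 / (1 - t) : ℝ) : ℂ) • ∑ i ∈ Finset.univ \ S, outer (u i))
  refine ⟨h1.mul h2, ?_⟩
  rw [chi, h1.natDegree_mul h2, charpoly_natDegree_eq_dim, charpoly_natDegree_eq_dim, Fintype.card_fin]

theorem QQ_monic (u : Fin m → EuclideanSpace ℂ (Fin d)) (t : ℝ) (s : Fin m → ℝ) :
    (QQ u t s).Monic ∧ (QQ u t s).natDegree = d + d := by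
  have hd : (QQ u t s).natDegree ≤ d + d := by
    apply natDegree_sum_le_of_forall_le
    intro S _
    exact (natDegree_C_mul_le _ _).trans (chi_monic u t S).2.le
  have hc : (QQ u t s).coeff (d + d) = 1 := by
    simp only [QQ, finsetSum_coeff, coeff_C_mul]
    have : ∀ S, (chi u t S).coeff (d + d) = 1 := by
      intro S
      have h := chi_monic u t S
      rw [← h.2]; exact h.1
    simp only [this, mul_one]
    rw [← Complex.ofReal_sum, wt_sum, Complex.ofReal_one]
  exact ⟨monic_of_natDegree_le_of_coeff_eq_one _ hd hc,
    natDegree_eq_of_le_of_coeff_ne_zero hd (by rw [hc]; exact one_ne_zero)⟩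

theorem QQ_real (u : Fin m → EuclideanSpace ℂ (Fin d)) (hu : ∑ i, outer (u i) = 1) {t : ℝ}
    (h0 : 0 < t) (h1 : t < 1) (s : Fin m → ℝ) (hs : ∀ i, 0 ≤ s i ∧ s i ≤ 1) (x : ℂ)
    (hx : (QQ u t s).eval x = 0) : x.im = 0 := by
  rw [QQ_eval u hu] at hx
  have g := Good_EE h0 h1 s hs (FF_good u hu) Finset.univ
  rcases lt_trichotomy x.im 0 with h | h | h
  · exfalso
    refine g.stab (fun _ => starRingEnd ℂ x) (fun _ => by simpa using h) ?_
    rw [g.conj (fun _ => x), hx, map_zero]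
  · exact h
  · exact absurd hx (g.stab (fun _ => x) (fun _ => h))

theorem wt_update (s : Fin m → ℝ) (i : Fin m) (r : ℝ) (S : Finset (Fin m)) :
    wt (Function.update s i r) Finset.univ S =
      (1 - r) * wt (Function.update s i 0) Finset.univ S + r * wt (Function.update s i 1) Finset.univ S := by
  have h : ∀ r : ℝ, (fun k => 1 - Function.update s i r k) = Function.update (fun k => 1 - s k) i (1 - r) := by
    intro r; ext k
    by_cases hk : k = i
    · subst hk; simp
    · simp [hk]
  have h' : ∀ r : ℝ, ∏ k ∈ Finset.univ \ S, (1 - Function.update s i r k) =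
      ∏ k ∈ Finset.univ \ S, Function.update (fun k => 1 - s k) i (1 - r) k := by
    intro r; rw [← h]
  simp only [wt, h']
  by_cases hi : i ∈ S
  · have h2 : i ∉ Finset.univ \ S := by simp [hi]
    simp only [Finset.prod_update_of_mem hi, Finset.prod_update_of_notMem h2]
    ring
  · have h2 : i ∈ Finset.univ \ S := by simp [hi]
    simp only [Finset.prod_update_of_mem h2, Finset.prod_update_of_notMem hi]
    ring

theorem QQ_aff (u : Fin m → EuclideanSpace ℂ (Fin d)) (t : ℝ) (s : Fin m → ℝ) (i : Fin m) (r : ℝ) :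
    QQ u t (Function.update s i r) =
      seg (QQ u t (Function.update s i 0)) (QQ u t (Function.update s i 1)) r := by
  simp only [seg, QQ, Finset.mul_sum, ← Finset.sum_add_distrib]
  refine Finset.sum_congr rfl fun S _ => ?_
  rw [wt_update s i r S]
  simp only [Complex.ofReal_add, Complex.ofReal_mul, map_add, map_mul]
  ring

theorem QQ_ind (u : Fin m → EuclideanSpace ℂ (Fin d)) (t : ℝ) (S : Finset (Fin m)) :
    QQ u t (fun i => if i ∈ S then 1 else 0) = chi u t S := by
  unfold QQ
  rw [Finset.sum_eq_single S]
  · have : wt (fun i => if i ∈ S then (1 : ℝ) else 0) Finset.univ S = 1 := by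
      unfold wt
      have e1 : ∏ i ∈ S, (if i ∈ S then (1 : ℝ) else 0) = 1 :=
        Finset.prod_eq_one fun i hi => by simp [hi]
      have e2 : ∏ i ∈ Finset.univ \ S, (1 - if i ∈ S then (1 : ℝ) else 0) = 1 :=
        Finset.prod_eq_one fun i hi => by
          have : i ∉ S := (Finset.mem_sdiff.mp hi).2
          simp [this]
      rw [e1, e2, mul_one]
    rw [this]; simp
  · intro S' _ hne
    have : wt (fun i => if i ∈ S then (1 : ℝ) else 0) Finset.univ S' = 0 := by
      unfold wt
      by_cases h : S' ⊆ S
      · obtain ⟨k, hk, hk'⟩ := Finset.not_subset.mp (fun h' => hne (Finset.Subset.antisymm h h'))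
        apply mul_eq_zero_of_right
        exact Finset.prod_eq_zero (i := k) (by simp [hk']) (by simp [hk])
      · obtain ⟨k, hk, hk'⟩ := Finset.not_subset.mp h
        apply mul_eq_zero_of_left
        exact Finset.prod_eq_zero hk (by simp [hk'])
    rw [this]; simp
  · intro h; simp at h

/-- The Marcus, Spielman, Srivastava bound. -/
theorem exists_chi (u : Fin m → EuclideanSpace ℂ (Fin d)) (hu : ∑ i, outer (u i) = 1) {t ε : ℝ}
    (h0 : 0 < t) (h1 : t < 1) (hε0 : 0 < ε) (hε : ∀ i, ‖u i‖ ^ 2 ≤ ε) :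
    ∃ S : Finset (Fin m), ∀ x : ℝ, (1 + Real.sqrt (2 * ε)) ^ 2 ≤ x → (chi u t S).eval (x : ℂ) ≠ 0 := by
  have hr : 0 < Real.sqrt (2 * ε) := Real.sqrt_pos.mpr (by linarith)
  have hr2 : Real.sqrt (2 * ε) ^ 2 = 2 * ε := Real.sq_sqrt (by linarith)
  set r := Real.sqrt (2 * ε) with hrdef
  have hs0 : ∀ i : Fin m, 0 ≤ (fun _ => t) i ∧ (fun _ => t) i ≤ 1 := fun _ => ⟨h0.le, h1.le⟩
  obtain ⟨S, hS⟩ := round_all ((1 + r) ^ 2) (d + d) (QQ u t)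
    (fun s hs => ⟨(QQ_monic u t s).1, (QQ_monic u t s).2, QQ_real u hu h0 h1 s hs⟩)
    (QQ_aff u t) (fun _ => t) hs0 (by
      intro x hx
      rw [QQ_eval u hu]
      have hx0 : 0 < r + r ^ 2 := by positivity
      refine barrier_s3 h0 h1 (FF_good u hu) (x0 := r + r ^ 2) (δ := 1 + r) (by linarith)
        (FF_above u hu _ hx0) (FF_bound u hu _ _ ε hx0 hε ?_) x (by nlinarith)
      rw [← hr2]
      apply le_of_eq
      field_simp
      ring)
  refine ⟨S, ?_⟩
  intro x hx
  rw [← QQ_ind]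
  exact hS x hx

theorem opNorm_le {M : Matrix (Fin d) (Fin d) ℂ} (hM : M.IsHermitian) {c : ℝ} (hc : 0 ≤ c)
    (h : ∀ x : ℝ, (Matrix.charpoly M).eval (x : ℂ) = 0 → |x| ≤ c) : opNorm M ≤ c := by
  unfold opNorm
  lift c to NNReal using hc
  have hsa : IsSelfAdjoint (Matrix.toEuclideanCLM (n := Fin d) (𝕜 := ℂ) M) :=
    IsSelfAdjoint.map (f := Matrix.toEuclideanCLM (n := Fin d) (𝕜 := ℂ)) hM
  have hsr := hsa.spectralRadius_eq_nnnorm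
  have hle : spectralRadius ℂ (Matrix.toEuclideanCLM (n := Fin d) (𝕜 := ℂ) M) ≤ (c : ENNReal) := by
    unfold spectralRadius
    refine iSup₂_le fun μ hμ => ?_
    have hre := hsa.mem_spectrum_eq_re hμ
    have hμ' : μ ∈ spectrum ℂ M := by
      have := AlgEquiv.spectrum_eq (Matrix.toEuclideanCLM (n := Fin d) (𝕜 := ℂ)) M
      rwa [this] at hμ
    rw [Matrix.mem_spectrum_iff_isRoot_charpoly, IsRoot.def, hre] at hμ'
    have := h _ hμ'
    rw [hre]
    norm_cast
  rw [hsr] at hle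
  have : ‖Matrix.toEuclideanCLM (n := Fin d) (𝕜 := ℂ) M‖₊ ≤ c := by
    exact_mod_cast hle
  exact_mod_cast this

theorem charpoly_eval_smul (B M : Matrix (Fin d) (Fin d) ℂ) (a b c x : ℂ) 
    (hM : x • (1 : Matrix (Fin d) (Fin d) ℂ) - M = c • (a • 1 - b • B)) (h : M.charpoly.eval x = 0)
    (hc : c ≠ 0) : (b • B).charpoly.eval a = 0 := by
  rw [eval_charpoly] at h ⊢
  have e : ∀ y : ℂ, Matrix.scalar (Fin d) y = y • (1 : Matrix (Fin d) (Fin d) ℂ) := by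
    intro y; ext i j; simp [Matrix.one_apply, Matrix.diagonal_apply]
  rw [e, hM, det_smul] at h
  rw [e]
  exact (mul_eq_zero.mp h).resolve_left (pow_ne_zero _ hc)

theorem final (u : Fin m → EuclideanSpace ℂ (Fin d)) (hu : ∑ i, outer (u i) = 1) {t ε : ℝ}
    (h0 : 0 < t) (h1 : t < 1) (hε0 : 0 < ε) (hε : ∀ i, ‖u i‖ ^ 2 ≤ ε) :
    ∃ S : Finset (Fin m), opNorm ((∑ i ∈ S, outer (u i)) - (t : ℂ) • 1) ≤
      (1 + Real.sqrt (2 * ε)) ^ 2 - 1 := by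
  obtain ⟨S, hS⟩ := exists_chi u hu h0 h1 hε0 hε
  refine ⟨S, ?_⟩
  have hr : 0 ≤ Real.sqrt (2 * ε) := Real.sqrt_nonneg _
  have hL : 1 ≤ (1 + Real.sqrt (2 * ε)) ^ 2 := by nlinarith
  generalize (1 + Real.sqrt (2 * ε)) ^ 2 = L at hS hL
  have ht : (t : ℂ) ≠ 0 := by exact_mod_cast h0.ne'
  have ht1 : (1 - t : ℂ) ≠ 0 := by
    have : (1 - t : ℝ) ≠ 0 := by linarith
    exact_mod_cast this
  have hcompl : ∑ i ∈ Finset.univ \ S, outer (u i) = 1 - ∑ i ∈ S, outer (u i) := by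
    rw [← hu, ← Finset.sum_sdiff (Finset.subset_univ S)]; simp
  apply opNorm_le _ (by linarith)
  · intro x hx
    have k1 : (x + t) / t < L := by
      by_contra hcon
      push Not at hcon
      apply hS _ hcon
      rw [chi, eval_mul]
      apply mul_eq_zero_of_left
      apply charpoly_eval_smul _ _ _ _ (t : ℂ) _ _ hx ht
      rw [smul_sub, smul_smul, smul_smul]
      push_cast
      rw [mul_div_cancel₀ _ ht, mul_one_div_cancel ht]
      rw [add_smul, one_smul]
      abel
    have k2 : (1 - t - x) / (1 - t) < L := by
      by_contra hcon
      push Not at hcon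
      apply hS _ hcon
      rw [chi, eval_mul]
      apply mul_eq_zero_of_right
      apply charpoly_eval_smul _ _ _ _ (-(1 - t : ℂ)) _ _ hx (neg_ne_zero.mpr ht1)
      rw [smul_sub, smul_smul, smul_smul, hcompl]
      push_cast
      rw [neg_mul, neg_mul, mul_div_cancel₀ _ ht1, mul_one_div_cancel ht1]
      rw [neg_smul, neg_smul, one_smul, sub_smul, sub_smul, one_smul]
      abel
    rw [div_lt_iff₀ h0] at k1
    rw [div_lt_iff₀ (by linarith)] at k2
    rw [abs_le]
    constructor <;> nlinarith
  · rw [Matrix.IsHermitian, conjTranspose_sub, conjTranspose_sum, conjTranspose_smul]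
    simp [outer_herm]

end polys
end KS

/-- There is a universal constant `C > 0` such that whenever `∑ uᵢuᵢ* = I`,
`‖uᵢ‖² ≤ ε` for all `i`, and `t ∈ [0,1]`, there is a set of indices `S` with
`‖∑_{i ∈ S} uᵢuᵢ* − t I‖ ≤ C √ε`. -/
theorem stmt3 :
    ∃ C : ℝ, 0 < C ∧
      ∀ (d m : ℕ) (ε : ℝ) (u : Fin m → EuclideanSpace ℂ (Fin d)),
        (∑ i, outer (u i) = 1) →
        (∀ i, ‖u i‖ ^ 2 ≤ ε) →
        ∀ t : ℝ, 0 ≤ t → t ≤ 1 →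
          ∃ S : Finset (Fin m),
            opNorm ((∑ i ∈ S, outer (u i)) - (t : ℂ) • 1) ≤ C * Real.sqrt ε := by
  refine ⟨5, by norm_num, ?_⟩
  intro d m ε u hu hε t h0 h1
  have hzero : opNorm (0 : Matrix (Fin d) (Fin d) ℂ) = 0 := by simp [opNorm]
  have hs := Real.sqrt_nonneg ε
  rcases h0.eq_or_lt with h | h0
  · refine ⟨∅, ?_⟩
    subst h
    simp [hzero, hs]
  rcases h1.eq_or_lt with h | h1
  · refine ⟨Finset.univ, ?_⟩
    subst h
    rw [hu]
    simp [hzero, hs]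
  rcases le_or_gt ε 0 with hε0 | hε0
  · refine ⟨∅, ?_⟩
    have hz : ∀ i, outer (u i) = 0 := by
      intro i
      have h2 : ‖u i‖ ^ 2 ≤ 0 := (hε i).trans hε0
      have h3 : u i = 0 := by
        have : ‖u i‖ = 0 := by nlinarith [norm_nonneg (u i)]
        exact norm_eq_zero.mp this
      ext a b
      simp [outer, h3]
    have h10 : (1 : Matrix (Fin d) (Fin d) ℂ) = 0 := by
      rw [← hu]; exact Finset.sum_eq_zero fun i _ => hz i
    rw [h10]
    simp [hzero, hs]
  rcases le_or_gt ε 1 with hε1 | hε1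
  · obtain ⟨S, hS⟩ := KS.final u hu h0 h1 hε0 hε
    refine ⟨S, hS.trans ?_⟩
    rw [Real.sqrt_mul (by norm_num)]
    have a1 : Real.sqrt 2 ≤ 1.5 := by
      rw [Real.sqrt_le_left (by norm_num)]; norm_num
    have a2 : Real.sqrt ε ≤ 1 := Real.sqrt_le_one.mpr hε1
    have a3 : Real.sqrt 2 ^ 2 = 2 := Real.sq_sqrt (by norm_num)
    have e : (1 + Real.sqrt 2 * Real.sqrt ε) ^ 2 - 1 =
        2 * (Real.sqrt 2 * Real.sqrt ε) + Real.sqrt 2 ^ 2 * (Real.sqrt ε * Real.sqrt ε) := by ring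
    rw [e, a3]
    nlinarith
  · refine ⟨∅, ?_⟩
    have hs1 : 1 ≤ Real.sqrt ε := Real.one_le_sqrt.mpr hε1.le
    have : opNorm ((∑ i ∈ (∅ : Finset (Fin m)), outer (u i)) - (t : ℂ) • 1) ≤ 1 := by
      apply KS.opNorm_le _ zero_le_one
      · intro x hx
        have h2 : (((0 : ℂ) • (0 : Matrix (Fin d) (Fin d) ℂ))).charpoly.eval ((x + t : ℝ) : ℂ) = 0 := by
          apply KS.charpoly_eval_smul _ _ _ _ 1 _ _ hx one_ne_zero
          simp [add_smul]
        rw [Matrix.eval_charpoly] at h2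
        simp at h2
        have : x + t = 0 := by
          have := h2.1
          exact_mod_cast this
        rw [abs_le]
        constructor <;> linarith
      · rw [Matrix.IsHermitian, Matrix.conjTranspose_sub, Matrix.conjTranspose_smul]
        simp
    linarith
end
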